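/- (Uniform invertibility of asymptotic charts.) For every open set Ũ compactly contained in U there exists ℏ₀ > 0 such that for all ℏ ∈ 𝓘 ∩ (0,ℏ₀] the restriction of G_ℏ to Ũ is injective, hence a diffeomorphism onto its open image with smooth inverse; moreover this inverse agrees, up to O(ℏ^∞) uniformly on compact subsets of its domain, with the formal inverse F_ℏ (a family of smooth maps admitting an asymptotic expansion F₀ + ℏF₁ + ⋯ with F₀ = G₀⁻¹ and F_ℏ∘G_ℏ = Id + O(ℏ^∞)). -/

import Mathlib

open Set Metric

noncomputable section

/-- Euclidean space `ℝⁿ`. -/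
abbrev Eucl (n : ℕ) : Type := EuclideanSpace ℝ (Fin n)

/-- The family `Gh ℏ` admits the asymptotic expansion `∑_j ℏ^j • Gc j` in the
`C^∞(U)` topology, uniformly for `ℏ ∈ I`. -/
def HasCinftyExpansion {n m : ℕ} (I : Set ℝ) (U : Set (Eucl n))
    (Gh : ℝ → Eucl n → Eucl m) (Gc : ℕ → Eucl n → Eucl m) : Prop :=
  (∀ h ∈ I, ContDiffOn ℝ (⊤ : ℕ∞) (Gh h) U) ∧
  (∀ j : ℕ, ContDiffOn ℝ (⊤ : ℕ∞) (Gc j) U) ∧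
  ∀ (N : ℕ) (K : Set (Eucl n)), K ⊆ U → IsCompact K → ∀ d : ℕ,
    ∃ C > 0, ∀ h ∈ I, ∀ x ∈ K,
      ‖iteratedFDerivWithin ℝ d
        (fun y => Gh h y - ∑ j ∈ Finset.range (N + 1), h ^ j • Gc j y) U x‖
        ≤ C * h ^ (N + 1)

/-- `G0` is a smooth diffeomorphism from `U` onto an open set containing the
closure of `B`. -/
structure IsDiffeoOntoNbhd {n : ℕ} (G0 : Eucl n → Eucl n) (U B : Set (Eucl n)) : Prop where
  contDiffOn : ContDiffOn ℝ (⊤ : ℕ∞) G0 U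
  injOn : InjOn G0 U
  isOpen_image : IsOpen (G0 '' U)
  closure_subset_image : closure B ⊆ G0 '' U
  smooth_inv : ∃ F0 : Eucl n → Eucl n, ContDiffOn ℝ (⊤ : ℕ∞) F0 (G0 '' U) ∧
      ∀ x ∈ U, F0 (G0 x) = x

/-!
An expansion `G_h = G₀ + h R_h`, whose remainder `R_h` again has expansions of every order, turns
a right inverse `F_h` of `G_h` into the solution of `F_h(y) = Φ(y - h R_h(F_h(y)))`, where `Φ` is a
local inverse of `G₀`. By Hadamard's lemma a smooth map preserves expansions, so each expansion of
`F_h` improves itself by one order. The recursion starts from the bare boundedness of all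
derivatives of `F_h`, which follows from `DF_h = (DG_h)⁻¹ ∘ F_h`, since `DG_h` stays in a compact
set of invertible maps for small `h`. The local coefficients fit together because they are iterated
limits of `F_h` as `h → 0`.

Injectivity on a compact set `L` passes from `G₀` to `G_h` for small `h` by `C¹` convergence: nearby
points are separated because `DG_h` is close to the invertible map `DG₀`, distant ones because
`G_h` is close to `G₀`. So `F_h` may be taken to be an exact inverse of `G_h` on the interior of
`L`, and the differences that have to be `O(h^∞)` vanish for small `h`.
-/

open Filter Topology
open scoped ContDiff NNReal

universe u

section Hadamard

variable {X F G : Type u} [NormedAddCommGroup X] [NormedSpace ℝ X] [ProperSpace X]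
  [NormedAddCommGroup F] [NormedSpace ℝ F] [NormedAddCommGroup G] [NormedSpace ℝ G]

theorem hasFDerivAt_intervalIntegral_of_contDiff {f : X → ℝ → G}
    (hf : ContDiff ℝ 1 fun p : X × ℝ => f p.1 p.2) (x₀ : X) :
    HasFDerivAt (fun x => ∫ t in (0 : ℝ)..1, f x t)
      (∫ t in (0 : ℝ)..1, (fderiv ℝ (fun p : X × ℝ => f p.1 p.2) (x₀, t)).comp
        (ContinuousLinearMap.inl ℝ X ℝ)) x₀ := by
  let D : X → ℝ → X →L[ℝ] G := fun x t =>
    (fderiv ℝ (fun p : X × ℝ => f p.1 p.2) (x, t)).comp (ContinuousLinearMap.inl ℝ X ℝ)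
  have hD : Continuous fun p : X × ℝ => D p.1 p.2 :=
    (hf.continuous_fderiv one_ne_zero).clm_comp continuous_const
  have hf_cont (x : X) : Continuous (f x) := hf.continuous.comp (.prodMk_right x)
  obtain ⟨M, hM⟩ := ((isCompact_closedBall x₀ 1).prod (isCompact_Icc (a := (0 : ℝ)) (b := 1)))
    |>.exists_bound_of_continuousOn hD.continuousOn
  refine intervalIntegral.hasFDerivAt_integral_of_dominated_of_fderiv_le (F' := D)
    (bound := fun _ => M) (closedBall_mem_nhds x₀ one_pos)
    (.of_forall fun x => (hf_cont x).aestronglyMeasurable) ((hf_cont x₀).intervalIntegrable _ _)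
    (hD.comp (.prodMk_right x₀)).aestronglyMeasurable
    (.of_forall fun t ht x hx => hM (x, t) ⟨hx, ?_⟩) intervalIntegrable_const
    (.of_forall fun t _ x _ => ?_)
  · rw [uIoc_of_le zero_le_one] at ht
    exact Ioc_subset_Icc_self ht
  · exact (hf.differentiable one_ne_zero (x, t)).hasFDerivAt.comp (f := fun y : X => (y, t)) x
      (hasFDerivAt_prodMk_left x t)

theorem contDiff_intervalIntegral (n : ℕ) {f : X → ℝ → G}
    (hf : ContDiff ℝ n fun p : X × ℝ => f p.1 p.2) :
    ContDiff ℝ n fun x => ∫ t in (0 : ℝ)..1, f x t := by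
  induction n generalizing G with
  | zero =>
    rw [Nat.cast_zero, contDiff_zero] at hf ⊢
    exact intervalIntegral.continuous_parametric_intervalIntegral_of_continuous' hf 0 1
  | succ n ih =>
    push_cast at hf ⊢
    rw [contDiff_succ_iff_hasFDerivAt]
    refine ⟨_, ih ?_, hasFDerivAt_intervalIntegral_of_contDiff (hf.of_le (by simp))⟩
    exact (hf.fderiv_right le_rfl).clm_comp contDiff_const

/-- **Hadamard's lemma** along lines. -/
theorem exists_contDiff_add_smul_eq [FiniteDimensional ℝ F] [CompleteSpace G] {φ : F → G}
    (hφ : ContDiff ℝ ∞ φ) :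
    ∃ ψ : F × F × ℝ → G, ContDiff ℝ ∞ ψ ∧ ∀ a v h, φ (a + h • v) = φ a + h • ψ (a, v, h) := by
  refine ⟨fun p => ∫ t in (0 : ℝ)..1, fderiv ℝ φ (p.1 + t • p.2.2 • p.2.1) p.2.1,
    contDiff_infty.2 fun n => contDiff_intervalIntegral (X := F × F × ℝ) n
      (f := fun p t => fderiv ℝ φ (p.1 + t • p.2.2 • p.2.1) p.2.1) ?_, fun a v h => ?_⟩
  · have hφ' : ContDiff ℝ n (fderiv ℝ φ) := (contDiff_infty.1 hφ (n + 1)).fderiv_right le_rfl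
    fun_prop
  · have hderiv (t : ℝ) : HasDerivAt (fun t : ℝ => φ (a + t • h • v))
        (h • fderiv ℝ φ (a + t • h • v) v) t := by
      have hd : DifferentiableAt ℝ φ (a + t • h • v) := hφ.differentiable (by simp) _
      have hline : HasDerivAt (fun t : ℝ => a + t • h • v) (h • v) t := by
        simpa using ((hasDerivAt_id t).smul_const (h • v)).const_add a
      simpa [Function.comp_def] using hd.hasFDerivAt.comp_hasDerivAt t hline
    have hcont : Continuous fun t : ℝ => h • fderiv ℝ φ (a + t • h • v) v := by
      have := hφ.continuous_fderiv (by simp)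
      fun_prop
    have hftc := intervalIntegral.integral_eq_sub_of_hasDerivAt (a := 0) (b := 1)
      (fun t _ => hderiv t) (hcont.intervalIntegrable _ _)
    rw [intervalIntegral.integral_smul, one_smul, zero_smul, add_zero] at hftc
    exact (add_eq_of_eq_sub' hftc).symm

end Hadamard

section LocalInverse

variable {E F : Type*} [NormedAddCommGroup E] [NormedSpace ℝ E] [NormedAddCommGroup F]
  [NormedSpace ℝ F]

theorem exists_contDiff_eventuallyEq [FiniteDimensional ℝ E] {U : Set E} (hU : IsOpen U)
    {f : E → F} (hf : ContDiffOn ℝ ∞ f U) {x : E} (hx : x ∈ U) :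
    ∃ g : E → F, ContDiff ℝ ∞ g ∧ g =ᶠ[𝓝 x] f := by
  obtain ⟨r, hr, hrU⟩ := nhds_basis_closedBall.mem_iff.1 (hU.mem_nhds hx)
  let χ : ContDiffBump x := ⟨r / 2, r, half_pos hr, half_lt_self hr⟩
  refine ⟨fun y => χ y • f y, contDiff_iff_contDiffAt.2 fun y => ?_, ?_⟩
  · by_cases hy : y ∈ U
    · exact χ.contDiff.contDiffAt.smul (hf.contDiffAt (hU.mem_nhds hy))
    · have hy_tsupport : y ∉ tsupport χ := fun h => hy (hrU (by rwa [χ.tsupport_eq] at h))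
      refine (contDiffAt_const (c := (0 : F))).congr_of_eventuallyEq ?_
      filter_upwards [(isClosed_tsupport χ).isOpen_compl.mem_nhds hy_tsupport] with z hz
      rw [image_eq_zero_of_notMem_tsupport hz, zero_smul]
  · filter_upwards [χ.eventuallyEq_one] with y hy
    simp [hy]

variable [CompleteSpace E] {f : E → F} {g : F → E} {a : E} {W : Set E}

theorem contDiffAt_and_fderiv_of_eventually_leftInverse (hf : ContDiffAt ℝ ∞ f a)
    (hinv : (fderiv ℝ f a).IsInvertible) (hg : ∀ᶠ x in 𝓝 a, g (f x) = x) :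
    ContDiffAt ℝ ∞ g (f a) ∧ fderiv ℝ g (f a) = (fderiv ℝ f a).inverse := by
  obtain ⟨e, he⟩ := hinv
  have hd : HasFDerivAt f (e : E →L[ℝ] F) a := he ▸ (hf.differentiableAt (by simp)).hasFDerivAt
  have hs := hf.hasStrictFDerivAt' hd (by simp)
  refine ⟨(hf.to_localInverse hd (by simp)).congr_of_eventuallyEq (hs.localInverse_unique hg), ?_⟩
  rw [(hs.to_local_left_inverse hg).hasFDerivAt.fderiv, ← he, ContinuousLinearMap.inverse_equiv]

theorem isOpen_image_of_isInvertible_fderiv (hW : IsOpen W) (hf : ContDiffOn ℝ ∞ f W)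
    (hinv : ∀ x ∈ W, (fderiv ℝ f x).IsInvertible) : IsOpen (f '' W) := by
  rw [isOpen_iff_mem_nhds]
  rintro _ ⟨a, ha, rfl⟩
  obtain ⟨e, he⟩ := hinv a ha
  have hfa := hf.contDiffAt (hW.mem_nhds ha)
  have hd : HasFDerivAt f (e : E →L[ℝ] F) a := he ▸ (hfa.differentiableAt (by simp)).hasFDerivAt
  rw [← (hfa.hasStrictFDerivAt' hd (by simp)).map_nhds_eq_of_equiv]
  exact image_mem_map (hW.mem_nhds ha)

theorem contDiffOn_image_of_leftInvOn (hW : IsOpen W) (hf : ContDiffOn ℝ ∞ f W)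
    (hinv : ∀ x ∈ W, (fderiv ℝ f x).IsInvertible) (hg : LeftInvOn g f W) :
    ContDiffOn ℝ ∞ g (f '' W) := by
  rintro _ ⟨a, ha, rfl⟩
  exact (contDiffAt_and_fderiv_of_eventually_leftInverse (hf.contDiffAt (hW.mem_nhds ha))
    (hinv a ha) (eventually_of_mem (hW.mem_nhds ha) hg)).1.contDiffWithinAt

theorem exists_contDiff_eventually_leftInverse [FiniteDimensional ℝ F] (hW : IsOpen W)
    (hf : ContDiffOn ℝ ∞ f W) (hinj : InjOn f W) (hinv : ∀ x ∈ W, (fderiv ℝ f x).IsInvertible)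
    (ha : a ∈ W) : ∃ g : F → E, ContDiff ℝ ∞ g ∧ ∀ᶠ x in 𝓝 a, g (f x) = x := by
  obtain ⟨g, hg, hgf⟩ := exists_contDiff_eventuallyEq
    (isOpen_image_of_isInvertible_fderiv hW hf hinv)
    (contDiffOn_image_of_leftInvOn hW hf hinv hinj.leftInvOn_invFunOn) (mem_image_of_mem f ha)
  refine ⟨g, hg, ?_⟩
  filter_upwards [(hf.continuousOn.continuousAt (hW.mem_nhds ha)).eventually hgf,
    hW.mem_nhds ha] with x hx hxW
  rw [hx, hinj.leftInvOn_invFunOn hxW]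

end LocalInverse

section DerivBounded

variable {ι X Y Z : Type*} [NormedAddCommGroup X] [NormedSpace ℝ X] [NormedAddCommGroup Y]
  [NormedSpace ℝ Y] [NormedAddCommGroup Z] [NormedSpace ℝ Z]

theorem norm_iteratedFDeriv_comp_le_of_contDiffAt {g : Y → Z} {f : X → Y} {n : ℕ} {x : X}
    (hg : ContDiffAt ℝ n g (f x)) (hf : ContDiffAt ℝ n f x) {C D : ℝ}
    (hC : ∀ i ≤ n, ‖iteratedFDeriv ℝ i g (f x)‖ ≤ C)
    (hD : ∀ i, 1 ≤ i → i ≤ n → ‖iteratedFDeriv ℝ i f x‖ ≤ D ^ i) :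
    ‖iteratedFDeriv ℝ n (g ∘ f) x‖ ≤ n.factorial * C * D ^ n := by
  obtain ⟨v, hv, hv_open, hfx⟩ := _root_.eventually_nhds_iff.1 (hg.eventually (by simp))
  obtain ⟨u, hu, hu_open, hx⟩ := _root_.eventually_nhds_iff.1
    ((hf.eventually (by simp)).and (hf.continuousAt.preimage_mem_nhds (hv_open.mem_nhds hfx)))
  have key := norm_iteratedFDerivWithin_comp_le (n := n) (N := n) (C := C) (D := D)
    (fun y hy => (hv y hy).contDiffWithinAt) (fun y hy => (hu y hy).1.contDiffWithinAt) le_rfl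
    hv_open.uniqueDiffOn hu_open.uniqueDiffOn (fun y hy => (hu y hy).2) hx
  simp only [iteratedFDerivWithin_of_isOpen _ hu_open hx,
    iteratedFDerivWithin_of_isOpen _ hv_open hfx] at key
  exact key hC hD

/-- The family `f` has bounded `C^d` jets at the moving base points `x`: eventually along `l`, the
map `f i` is `C^d` at `x i`, with derivatives of order at most `d` bounded by a constant that does
not depend on `i`. -/
def DerivBounded (d : ℕ) (l : Filter ι) (f : ι → X → Y) (x : ι → X) : Prop :=
  ∃ C, ∀ᶠ i in l, ContDiffAt ℝ d (f i) (x i) ∧ ∀ k ≤ d, ‖iteratedFDeriv ℝ k (f i) (x i)‖ ≤ C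

namespace DerivBounded

variable {d : ℕ} {l : Filter ι} {f : ι → X → Y} {x : ι → X}

theorem of_forall_le (hf : ∀ᶠ i in l, ContDiffAt ℝ d (f i) (x i))
    (h : ∀ k ≤ d, ∃ C, ∀ᶠ i in l, ‖iteratedFDeriv ℝ k (f i) (x i)‖ ≤ C) :
    DerivBounded d l f x := by
  choose! C hC using h
  obtain ⟨M, hM⟩ := ((finite_Iic d).image C).bddAbove
  refine ⟨M, ?_⟩
  filter_upwards [hf, (finite_Iic d).eventually_all.2 hC] with i hi hCi
  exact ⟨hi, fun k hk => (hCi k hk).trans (hM (mem_image_of_mem C hk))⟩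

theorem mono {l' : Filter ι} (hf : DerivBounded d l f x) (hl : l' ≤ l) : DerivBounded d l' f x :=
  hf.imp fun _ h => h.filter_mono hl

theorem sup {l' : Filter ι} (hf : DerivBounded d l f x) (hf' : DerivBounded d l' f x) :
    DerivBounded d (l ⊔ l') f x := by
  obtain ⟨C, hC⟩ := hf
  obtain ⟨D, hD⟩ := hf'
  exact ⟨max C D, eventually_sup.2
    ⟨hC.mono fun _ h => h.imp_right fun h k hk => (h k hk).trans (le_max_left _ _),
      hD.mono fun _ h => h.imp_right fun h k hk => (h k hk).trans (le_max_right _ _)⟩⟩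

theorem prod_principal {K : Set X} (hK : IsCompact K) {f : ι → X → Y}
    (hf : ∀ y ∈ K, DerivBounded d (l ×ˢ 𝓝 y) (fun p => f p.1) Prod.snd) :
    DerivBounded d (l ×ˢ 𝓟 K) (fun p => f p.1) Prod.snd := by
  refine hK.induction_on (p := fun s => DerivBounded d (l ×ˢ 𝓟 s) (fun p => f p.1) Prod.snd)
    ⟨0, by simp⟩ (fun s t hst ht => ht.mono (Filter.prod_mono_right l (principal_mono.2 hst)))
    (fun s t hs ht => ?_) fun y hy => ?_
  · rw [← sup_principal, prod_sup]
    exact hs.sup ht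
  · obtain ⟨C, hC⟩ := hf y hy
    obtain ⟨pa, ha, pb, hb, hab⟩ := eventually_prod_iff.1 hC
    exact ⟨{z | pb z}, mem_nhdsWithin_of_mem_nhds hb, C,
      eventually_prod_iff.2 ⟨pa, ha, pb, mem_principal_self _, hab⟩⟩

theorem comp_tendsto {κ : Type*} {m : Filter κ} {φ : κ → ι} (hf : DerivBounded d l f x)
    (hφ : Tendsto φ m l) : DerivBounded d m (f ∘ φ) (x ∘ φ) :=
  hf.imp fun _ h => hφ.eventually h

theorem congr {f' : ι → X → Y} (hf : DerivBounded d l f x)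
    (h : ∀ᶠ i in l, f' i =ᶠ[𝓝 (x i)] f i) : DerivBounded d l f' x := by
  obtain ⟨C, hC⟩ := hf
  refine ⟨C, ?_⟩
  filter_upwards [hC, h] with i hi heq
  refine ⟨hi.1.congr_of_eventuallyEq heq, fun k hk => ?_⟩
  rw [(heq.iteratedFDeriv ℝ k).eq_of_nhds]
  exact hi.2 k hk

theorem comp {g : ι → Y → Z} (hg : DerivBounded d l g fun i => f i (x i))
    (hf : DerivBounded d l f x) : DerivBounded d l (fun i => g i ∘ f i) x := by
  obtain ⟨C, hC⟩ := hg
  obtain ⟨D, hD⟩ := hf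
  refine of_forall_le ?_ fun k hk => ⟨k.factorial * C * (max 1 D) ^ k, ?_⟩
  · filter_upwards [hC, hD] with i hgi hfi using hgi.1.comp _ hfi.1
  · filter_upwards [hC, hD] with i hgi hfi
    refine norm_iteratedFDeriv_comp_le_of_contDiffAt (hgi.1.of_le (mod_cast hk))
      (hfi.1.of_le (mod_cast hk)) (fun j hj => hgi.2 j (hj.trans hk)) fun j h1 hj => ?_
    calc ‖iteratedFDeriv ℝ j (f i) (x i)‖ ≤ D := hfi.2 j (hj.trans hk)
      _ ≤ max 1 D := le_max_right _ _
      _ ≤ max 1 D ^ j := le_self_pow₀ (le_max_left _ _) (by omega)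

theorem prodMk {g : ι → X → Z} (hf : DerivBounded d l f x) (hg : DerivBounded d l g x) :
    DerivBounded d l (fun i y => (f i y, g i y)) x := by
  obtain ⟨C, hC⟩ := hf
  obtain ⟨D, hD⟩ := hg
  refine ⟨max C D, ?_⟩
  filter_upwards [hC, hD] with i hfi hgi
  refine ⟨hfi.1.prodMk hgi.1, fun k hk => ?_⟩
  rw [iteratedFDeriv_prodMk hfi.1 hgi.1 (mod_cast hk), ContinuousMultilinearMap.opNorm_prod]
  exact max_le_max (hfi.2 k hk) (hgi.2 k hk)

theorem fderiv (hf : DerivBounded (d + 1) l f x) :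
    DerivBounded d l (fun i => fderiv ℝ (f i)) x := by
  obtain ⟨C, hC⟩ := hf
  refine ⟨C, ?_⟩
  filter_upwards [hC] with i hi
  refine ⟨hi.1.fderiv_right le_rfl, fun k hk => ?_⟩
  rw [norm_iteratedFDeriv_fderiv]
  exact hi.2 (k + 1) (Nat.succ_le_succ hk)

theorem of_fderiv (hf : ∀ᶠ i in l, ContDiffAt ℝ (d + 1 : ℕ) (f i) (x i))
    (hbdd : ∃ C, ∀ᶠ i in l, ‖f i (x i)‖ ≤ C)
    (hf' : DerivBounded d l (fun i => _root_.fderiv ℝ (f i)) x) : DerivBounded (d + 1) l f x := by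
  obtain ⟨C, hC⟩ := hf'
  refine of_forall_le hf fun k hk => ?_
  cases k with
  | zero => simpa using hbdd
  | succ k =>
    refine ⟨C, hC.mono fun i hi => ?_⟩
    rw [← norm_iteratedFDeriv_fderiv]
    exact hi.2 k (Nat.le_of_succ_le_succ hk)

theorem of_isCompact {g : X → Y} {K : Set X} (hK : IsCompact K)
    (hg : ∀ y ∈ K, ContDiffAt ℝ d g y) (hx : ∀ᶠ i in l, x i ∈ K) :
    DerivBounded d l (fun _ => g) x := by
  refine of_forall_le (hx.mono fun i hi => hg _ hi) fun k hk => ?_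
  obtain ⟨C, hC⟩ := hK.exists_bound_of_continuousOn (f := iteratedFDeriv ℝ k g) fun y hy =>
    ((hg y hy).iteratedFDeriv_right (m := 0) (by simpa using mod_cast hk)).continuousAt
      |>.continuousWithinAt
  exact ⟨C, hx.mono fun i hi => hC _ hi⟩

theorem of_tendsto [ProperSpace X] {g : X → Y} (hg : ContDiff ℝ d g) {x₀ : X}
    (hx : Tendsto x l (𝓝 x₀)) : DerivBounded d l (fun _ => g) x :=
  of_isCompact (isCompact_closedBall x₀ 1) (fun _ _ => hg.contDiffAt)
    (hx.eventually (closedBall_mem_nhds x₀ one_pos))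

theorem contDiff_comp [ProperSpace Y] {g : Y → Z} (hg : ContDiff ℝ d g)
    (hf : DerivBounded d l f x) : DerivBounded d l (fun i => g ∘ f i) x := by
  obtain ⟨C, hC⟩ := id hf
  refine comp (of_isCompact (isCompact_closedBall (0 : Y) C) (fun _ _ => hg.contDiffAt) ?_) hf
  filter_upwards [hC] with i hi
  simpa using hi.2 0 (Nat.zero_le d)

theorem const {c : ι → Y} (hc : ∃ C, ∀ᶠ i in l, ‖c i‖ ≤ C) :
    DerivBounded d l (fun i _ => c i) x := by
  obtain ⟨C, hC⟩ := hc
  refine of_forall_le (.of_forall fun i => contDiffAt_const) fun k _ => ⟨C, ?_⟩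
  filter_upwards [hC] with i hi
  rcases eq_or_ne k 0 with rfl | hk
  · simpa using hi
  · rw [iteratedFDeriv_const_of_ne hk]
    simpa using (norm_nonneg _).trans hi

end DerivBounded

end DerivBounded

section LocalExpansion

theorem eventually_prod_nhds_eventually_nhds {ι Y : Type*} [TopologicalSpace Y] {l : Filter ι}
    {y : Y} {P : ι × Y → Prop} (h : ∀ᶠ p in l ×ˢ 𝓝 y, P p) :
    ∀ᶠ p in l ×ˢ 𝓝 y, ∀ᶠ z in 𝓝 p.2, P (p.1, z) := by
  obtain ⟨pa, ha, pb, hb, hab⟩ := eventually_prod_iff.1 h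
  exact eventually_prod_iff.2 ⟨pa, ha, _, eventually_eventually_nhds.2 hb,
    fun hx _ hy => hy.mono fun _ hz => hab hx hz⟩

theorem tendsto_fst_nhdsWithin_prod {Y : Type*} {I : Set ℝ} {a : ℝ} {l : Filter Y} :
    Tendsto Prod.fst (𝓝[I] a ×ˢ l) (𝓝 a) :=
  tendsto_fst.mono_right nhdsWithin_le_nhds

/-- The family `f` has an asymptotic expansion with `N` coefficients, smoothly near `x₀`, as `h`
tends to `0` in `I`. The definition peels off one coefficient at a time: `f h = f₀ + h • g h`, where
`g` has an expansion with `N - 1` coefficients; an expansion without coefficients is a bound on each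
derivative. Coefficients are germs at `x₀`, so they may be taken smooth on the whole space. -/
def HasExpansionAt {E F : Type*} [NormedAddCommGroup E] [NormedSpace ℝ E] [NormedAddCommGroup F]
    [NormedSpace ℝ F] (I : Set ℝ) (x₀ : E) : ℕ → (ℝ → E → F) → Prop
  | 0, f => ∀ d, DerivBounded d (𝓝[I] 0 ×ˢ 𝓝 x₀) (fun p : ℝ × E => f p.1) Prod.snd
  | N + 1, f => ∃ (f₀ : E → F) (g : ℝ → E → F), ContDiff ℝ ∞ f₀ ∧ HasExpansionAt I x₀ N g ∧
      ∀ᶠ p : ℝ × E in 𝓝[I] 0 ×ˢ 𝓝 x₀, f p.1 p.2 = f₀ p.2 + p.1 • g p.1 p.2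

namespace HasExpansionAt

section Basic

variable {E F G : Type*} [NormedAddCommGroup E] [NormedSpace ℝ E] [NormedAddCommGroup F]
  [NormedSpace ℝ F] [NormedAddCommGroup G] [NormedSpace ℝ G] {I : Set ℝ} {x₀ : E} {N : ℕ}
  {f : ℝ → E → F}

theorem congr {f' : ℝ → E → F} (hf : HasExpansionAt I x₀ N f)
    (h : ∀ᶠ p : ℝ × E in 𝓝[I] 0 ×ˢ 𝓝 x₀, f' p.1 p.2 = f p.1 p.2) : HasExpansionAt I x₀ N f' := by
  cases N with
  | zero => exact fun d => (hf d).congr (eventually_prod_nhds_eventually_nhds h)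
  | succ N =>
    obtain ⟨f₀, g, hf₀, hg, hfg⟩ := hf
    exact ⟨f₀, g, hf₀, hg, h.mp (hfg.mono fun p hp heq => heq.trans hp)⟩

theorem mono {J : Set ℝ} (hf : HasExpansionAt I x₀ N f) (hJI : 𝓝[J] 0 ≤ 𝓝[I] 0) :
    HasExpansionAt J x₀ N f := by
  have hle := Filter.prod_mono_left (𝓝 x₀) hJI
  induction N generalizing f with
  | zero => exact fun d => (hf d).mono hle
  | succ N ih =>
    obtain ⟨f₀, g, hf₀, hg, hfg⟩ := hf
    exact ⟨f₀, g, hf₀, ih hg, hfg.filter_mono hle⟩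

theorem prodMk {f' : ℝ → E → G} (hf : HasExpansionAt I x₀ N f) (hf' : HasExpansionAt I x₀ N f') :
    HasExpansionAt I x₀ N fun h y => (f h y, f' h y) := by
  induction N generalizing f f' with
  | zero => exact fun d => (hf d).prodMk (hf' d)
  | succ N ih =>
    obtain ⟨f₀, g, hf₀, hg, hfg⟩ := hf
    obtain ⟨f₀', g', hf₀', hg', hfg'⟩ := hf'
    refine ⟨_, _, hf₀.prodMk hf₀', ih hg hg', ?_⟩
    filter_upwards [hfg, hfg'] with p hp hp'
    rw [hp, hp', Prod.smul_mk, Prod.mk_add_mk]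

theorem of_contDiff [ProperSpace E] {φ : E → F} (hφ : ContDiff ℝ ∞ φ) :
    HasExpansionAt I x₀ N fun _ => φ := by
  induction N generalizing φ with
  | zero => exact fun d => .of_tendsto (contDiff_infty.1 hφ d) tendsto_snd
  | succ N ih => exact ⟨φ, fun _ _ => 0, hφ, ih contDiff_const, by simp⟩

theorem param [ProperSpace E] : HasExpansionAt I x₀ N fun h _ => h := by
  cases N with
  | zero =>
    refine fun d => .const ⟨1, ?_⟩
    simpa using tendsto_fst_nhdsWithin_prod.eventually (closedBall_mem_nhds (0 : ℝ) one_pos)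
  | succ N => exact ⟨fun _ => 0, fun _ _ => 1, contDiff_const, of_contDiff contDiff_const, by simp⟩

end Basic

variable {E : Type*} {F G : Type u} [NormedAddCommGroup E] [NormedSpace ℝ E]
  [NormedAddCommGroup F] [NormedSpace ℝ F] [NormedAddCommGroup G] [NormedSpace ℝ G]
  [ProperSpace E] [FiniteDimensional ℝ F] {I : Set ℝ} {x₀ : E} {N : ℕ} {f : ℝ → E → F}

theorem contDiff_comp [CompleteSpace G] {φ : F → G} (hφ : ContDiff ℝ ∞ φ)
    (hf : HasExpansionAt I x₀ N f) : HasExpansionAt I x₀ N fun h y => φ (f h y) := by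
  induction N generalizing F with
  | zero =>
    exact fun d => (hf d).contDiff_comp (contDiff_infty.1 hφ d)
  | succ N ih =>
    obtain ⟨f₀, g, hf₀, hg, hfg⟩ := hf
    obtain ⟨ψ, hψ, hφψ⟩ := exists_contDiff_add_smul_eq hφ
    refine ⟨φ ∘ f₀, _, hφ.comp hf₀, ih hψ ((of_contDiff hf₀).prodMk (hg.prodMk param)), ?_⟩
    filter_upwards [hfg] with p hp
    rw [hp, hφψ, Function.comp_apply]

theorem of_succ (hf : HasExpansionAt I x₀ (N + 1) f) : HasExpansionAt I x₀ N f := by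
  obtain ⟨f₀, g, hf₀, hg, hfg⟩ := hf
  exact (contDiff_comp (φ := fun q : F × F × ℝ => q.1 + q.2.2 • q.2.1) (by fun_prop)
    ((of_contDiff hf₀).prodMk (hg.prodMk param))).congr hfg

theorem order_zero (hf : HasExpansionAt I x₀ N f) : HasExpansionAt I x₀ 0 f := by
  induction N with
  | zero => exact hf
  | succ N ih => exact ih hf.of_succ

theorem add_param_smul {g : ℝ → E → F} (hf : HasExpansionAt I x₀ (N + 1) f)
    (hg : HasExpansionAt I x₀ N g) : HasExpansionAt I x₀ (N + 1) fun h y => f h y + h • g h y := by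
  obtain ⟨f₀, f₁, hf₀, hf₁, hff⟩ := hf
  refine ⟨f₀, _, hf₀, contDiff_comp (φ := fun q : F × F => q.1 + q.2) (by fun_prop)
    (hf₁.prodMk hg), ?_⟩
  filter_upwards [hff] with p hp
  rw [hp, smul_add, add_assoc]

theorem comp [FiniteDimensional ℝ G] {g : ℝ → F → G} {z₀ : F} (hg : HasExpansionAt I z₀ N g)
    (hf : HasExpansionAt I x₀ N f)
    (hfz : Tendsto (fun p : ℝ × E => f p.1 p.2) (𝓝[I] 0 ×ˢ 𝓝 x₀) (𝓝 z₀)) :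
    HasExpansionAt I x₀ N fun h y => g h (f h y) := by
  have htend : Tendsto (fun p : ℝ × E => (p.1, f p.1 p.2)) (𝓝[I] 0 ×ˢ 𝓝 x₀) (𝓝[I] 0 ×ˢ 𝓝 z₀) :=
    tendsto_fst.prodMk hfz
  induction N generalizing g with
  | zero =>
    exact fun d => .comp (g := fun p : ℝ × E => g p.1) (f := fun p => f p.1)
      ((hg d).comp_tendsto htend) (hf d)
  | succ N ih =>
    obtain ⟨g₀, r, hg₀, hr, hgr⟩ := hg
    exact ((contDiff_comp hg₀ hf).add_param_smul (ih hr hf.of_succ)).congr (htend.eventually hgr)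

/-- The inverse `f` of `G₀ + h R` solves `f = Φ (y - h R(f))`, where `Φ` is a smooth local inverse
of `G₀`, so each expansion of `f` yields one with a further coefficient. -/
theorem of_rightInverse {E F : Type u} [NormedAddCommGroup E] [NormedSpace ℝ E]
    [FiniteDimensional ℝ E] [NormedAddCommGroup F] [NormedSpace ℝ F] [FiniteDimensional ℝ F]
    {I : Set ℝ} {G₀ : E → F} {R : ℝ → E → F} {Φ : F → E} {f : ℝ → F → E} {x₀ : E} {y₀ : F}
    (hR : ∀ N, HasExpansionAt I x₀ N R) (hΦ : ContDiff ℝ ∞ Φ) (hΦG : ∀ᶠ x in 𝓝 x₀, Φ (G₀ x) = x)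
    (hf : HasExpansionAt I y₀ 0 f)
    (hfx : Tendsto (fun p : ℝ × F => f p.1 p.2) (𝓝[I] 0 ×ˢ 𝓝 y₀) (𝓝 x₀))
    (hGf : ∀ᶠ p : ℝ × F in 𝓝[I] 0 ×ˢ 𝓝 y₀, G₀ (f p.1 p.2) + p.1 • R p.1 (f p.1 p.2) = p.2)
    (N : ℕ) : HasExpansionAt I y₀ N f := by
  induction N with
  | zero => exact hf
  | succ N ih =>
    have hRf : HasExpansionAt I y₀ N fun h y => -R h (f h y) :=
      contDiff_comp (φ := Neg.neg) contDiff_neg ((hR N).comp ih hfx)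
    refine (contDiff_comp hΦ ((of_contDiff contDiff_id).add_param_smul hRf)).congr ?_
    filter_upwards [hGf, hfx.eventually hΦG] with p hp hpΦ
    rw [smul_neg, ← sub_eq_add_neg, id, ← eq_sub_of_add_eq hp, hpΦ]

end HasExpansionAt

end LocalExpansion

section SmoothExpansion

/-- `HasCinftyExpansion` for maps between arbitrary real normed spaces. -/
def HasSmoothExpansionOn {E F : Type*} [NormedAddCommGroup E] [NormedSpace ℝ E]
    [NormedAddCommGroup F] [NormedSpace ℝ F] (I : Set ℝ) (U : Set E) (Gh : ℝ → E → F)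
    (Gc : ℕ → E → F) : Prop :=
  (∀ h ∈ I, ContDiffOn ℝ ∞ (Gh h) U) ∧ (∀ j, ContDiffOn ℝ ∞ (Gc j) U) ∧
  ∀ (N : ℕ) (K : Set E), K ⊆ U → IsCompact K → ∀ d : ℕ, ∃ C > 0, ∀ h ∈ I, ∀ x ∈ K,
    ‖iteratedFDerivWithin ℝ d (fun y => Gh h y - ∑ j ∈ Finset.range (N + 1), h ^ j • Gc j y) U x‖
      ≤ C * h ^ (N + 1)

/-- The remainder of `Gh` after the first `k` terms of the expansion `∑ h ^ j • Gc j`, divided by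
`h ^ k`. -/
def asymptoticRemainder {E F : Type*} [AddCommGroup F] [Module ℝ F] (Gh : ℝ → E → F)
    (Gc : ℕ → E → F) (k : ℕ) (h : ℝ) (y : E) : F :=
  (h ^ k)⁻¹ • (Gh h y - ∑ j ∈ Finset.range k, h ^ j • Gc j y)

section Algebra

variable {E F : Type*} [AddCommGroup F] [Module ℝ F] (Gh : ℝ → E → F) (Gc : ℕ → E → F)

theorem asymptoticRemainder_zero : asymptoticRemainder Gh Gc 0 = Gh := by
  ext h y
  simp [asymptoticRemainder]

theorem asymptoticRemainder_eq_add_smul (k : ℕ) {h : ℝ} (hh : h ≠ 0) (y : E) :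
    asymptoticRemainder Gh Gc k h y = Gc k y + h • asymptoticRemainder Gh Gc (k + 1) h y := by
  rw [asymptoticRemainder, asymptoticRemainder, Finset.sum_range_succ, smul_smul, pow_succ, mul_inv,
    mul_comm, inv_mul_cancel_right₀ hh]
  rw [← sub_sub, smul_sub _ _ (h ^ k • _), inv_smul_smul₀ (pow_ne_zero k hh), add_sub_cancel]

theorem eventually_eq_add_smul_asymptoticRemainder {I : Set ℝ} (hI : I ⊆ Ioi 0) (l : Filter E) :
    ∀ᶠ p in 𝓝[I] 0 ×ˢ l, Gh p.1 p.2 = Gc 0 p.2 + p.1 • asymptoticRemainder Gh Gc 1 p.1 p.2 := by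
  filter_upwards [Eventually.prod_inl self_mem_nhdsWithin l] with p hpI
  rw [← asymptoticRemainder_eq_add_smul _ _ _ (hI hpI).ne', asymptoticRemainder_zero]

end Algebra

variable {E F : Type*} [NormedAddCommGroup E] [NormedSpace ℝ E] [NormedAddCommGroup F]
  [NormedSpace ℝ F] {I : Set ℝ} {U : Set E} {Gh : ℝ → E → F} {Gc : ℕ → E → F}

theorem contDiffAt_sub_sum (hU : IsOpen U) {x : E} (hx : x ∈ U) {h : ℝ}
    (hGh : ContDiffOn ℝ ∞ (Gh h) U) (hGc : ∀ j, ContDiffOn ℝ ∞ (Gc j) U) (k d : ℕ) :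
    ContDiffAt ℝ d (fun y => Gh h y - ∑ j ∈ Finset.range k, h ^ j • Gc j y) x :=
  contDiffAt_infty.1 ((hGh.sub (.sum fun j _ => (hGc j).const_smul _)).contDiffAt
    (hU.mem_nhds hx)) d

theorem norm_iteratedFDerivWithin_sub_sum (hU : IsOpen U) {x : E} (hx : x ∈ U) {h : ℝ} (hh : 0 < h)
    (hGh : ContDiffOn ℝ ∞ (Gh h) U) (hGc : ∀ j, ContDiffOn ℝ ∞ (Gc j) U) (k d : ℕ) :
    ‖iteratedFDerivWithin ℝ d (fun y => Gh h y - ∑ j ∈ Finset.range k, h ^ j • Gc j y) U x‖ =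
      ‖iteratedFDeriv ℝ d (asymptoticRemainder Gh Gc k h) x‖ * h ^ k := by
  have hpos : 0 < h ^ k := pow_pos hh k
  unfold asymptoticRemainder
  rw [iteratedFDerivWithin_of_isOpen _ hU hx,
    iteratedFDeriv_const_smul_apply' (contDiffAt_sub_sum hU hx hGh hGc k d), norm_smul, norm_inv,
    Real.norm_of_nonneg hpos.le, mul_comm, mul_inv_cancel_left₀ hpos.ne']

theorem hasSmoothExpansionOn_iff (hI : I ⊆ Ioi 0) (hU : IsOpen U) :
    HasSmoothExpansionOn I U Gh Gc ↔
      (∀ h ∈ I, ContDiffOn ℝ ∞ (Gh h) U) ∧ (∀ j, ContDiffOn ℝ ∞ (Gc j) U) ∧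
      ∀ (N : ℕ) (K : Set E), K ⊆ U → IsCompact K → ∀ d : ℕ,
        DerivBounded d (𝓟 (I ×ˢ K)) (fun p => asymptoticRemainder Gh Gc (N + 1) p.1) Prod.snd := by
  refine and_congr_right fun hGh => and_congr_right fun hGc => forall_congr' fun N =>
    forall₃_congr fun K hKU _ => ?_
  have key {h : ℝ} (hh : h ∈ I) {x : E} (hx : x ∈ K) :=
    norm_iteratedFDerivWithin_sub_sum hU (hKU hx) (hI hh) (hGh h hh) hGc (N + 1)
  constructor
  · refine fun hbound d => .of_forall_le ?_ fun k _ => ?_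
    · exact eventually_principal.2 fun p hp =>
        (contDiffAt_sub_sum hU (hKU hp.2) (hGh p.1 hp.1) hGc (N + 1) d).const_smul _
    · obtain ⟨C, -, hC⟩ := hbound k
      refine ⟨C, eventually_principal.2 fun p hp => ?_⟩
      have hle := hC p.1 hp.1 p.2 hp.2
      rw [key hp.1 hp.2 k] at hle
      exact le_of_mul_le_mul_right hle (pow_pos (hI hp.1) _)
  · intro hbound d
    obtain ⟨C, hC⟩ := hbound d
    refine ⟨max C 1, by positivity, fun h hh x hx => ?_⟩
    rw [key hh hx d]
    exact mul_le_mul_of_nonneg_right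
      (((eventually_principal.1 hC (h, x) ⟨hh, hx⟩).2 d le_rfl).trans (le_max_left _ _))
      (pow_nonneg (hI hh).le _)

namespace HasSmoothExpansionOn

theorem derivBounded_remainder (hexp : HasSmoothExpansionOn I U Gh Gc) (hI : I ⊆ Ioi 0)
    (hU : IsOpen U) {K : Set E} (hKU : K ⊆ U) (hK : IsCompact K) (N d : ℕ) :
    DerivBounded d (𝓟 (I ×ˢ K)) (fun p => asymptoticRemainder Gh Gc (N + 1) p.1) Prod.snd :=
  ((hasSmoothExpansionOn_iff hI hU).1 hexp).2.2 N K hKU hK d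

variable [FiniteDimensional ℝ E] {x₀ : E}

theorem hasExpansionAt_remainder (hexp : HasSmoothExpansionOn I U Gh Gc) (hI : I ⊆ Ioi 0)
    (hU : IsOpen U) (hx₀ : x₀ ∈ U) (k N : ℕ) :
    HasExpansionAt I x₀ N (asymptoticRemainder Gh Gc (k + 1)) := by
  induction N generalizing k with
  | zero =>
    obtain ⟨r, hr, hrU⟩ := nhds_basis_closedBall.mem_iff.1 (hU.mem_nhds hx₀)
    exact fun d => (hexp.derivBounded_remainder hI hU hrU (isCompact_closedBall x₀ r) k d).mono
      (le_principal_iff.2 (prod_mem_prod self_mem_nhdsWithin (closedBall_mem_nhds x₀ hr)))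
  | succ N ih =>
    obtain ⟨c, hc, hceq⟩ := exists_contDiff_eventuallyEq hU (hexp.2.1 (k + 1)) hx₀
    refine ⟨c, _, hc, ih (k + 1), ?_⟩
    filter_upwards [Eventually.prod_inl self_mem_nhdsWithin (𝓝 x₀), hceq.prod_inr (𝓝[I] 0)]
      with p hpI hpc
    rw [asymptoticRemainder_eq_add_smul _ _ _ (hI hpI).ne', hpc]

end HasSmoothExpansionOn

end SmoothExpansion

section Globalization

theorem exists_forall_le_of_eventually_nhdsWithin_zero {I : Set ℝ} (hI : I ⊆ Ioi 0) {P : ℝ → Prop}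
    (hP : ∀ᶠ h in 𝓝[I] (0 : ℝ), P h) : ∃ δ > 0, ∀ h ∈ I, h ≤ δ → P h := by
  obtain ⟨δ, hδ, hδP⟩ := (nhdsWithin_hasBasis nhds_basis_closedBall I).mem_iff.1 hP
  refine ⟨δ, hδ, fun h hh hle => hδP ⟨?_, hh⟩⟩
  simpa [abs_of_pos (mem_Ioi.1 (hI hh))] using hle

/-- The pointwise limit of `f h` as `h` tends to `0` in `I`, with a junk value where it does not
exist. -/
def leadingTerm {E F : Type*} [TopologicalSpace F] [Nonempty F] (I : Set ℝ) (f : ℝ → E → F)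
    (y : E) : F :=
  limUnder (𝓝[I] 0) fun h => f h y

/-- The family `g` in `f h = f₀ + h • g h`, where `f₀` is the leading term of `f`. -/
def rescaledRemainder {E F : Type*} [TopologicalSpace F] [AddCommGroup F] [Module ℝ F] (I : Set ℝ)
    (f : ℝ → E → F) (h : ℝ) (y : E) : F :=
  h⁻¹ • (f h y - leadingTerm I f y)

/-- The coefficients of the asymptotic expansion of `f`, if it has one, as iterated limits. -/
def expansionCoeff {E F : Type*} [TopologicalSpace F] [AddCommGroup F] [Module ℝ F] (I : Set ℝ)
    (f : ℝ → E → F) (k : ℕ) : E → F :=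
  leadingTerm I ((rescaledRemainder I)^[k] f)

theorem asymptoticRemainder_expansionCoeff {E F : Type*} [TopologicalSpace F] [AddCommGroup F]
    [Module ℝ F] (I : Set ℝ) (f : ℝ → E → F) (k : ℕ) {h : ℝ} (hh : h ≠ 0) :
    asymptoticRemainder f (expansionCoeff I f) k h = (rescaledRemainder I)^[k] f h := by
  induction k with
  | zero => rw [asymptoticRemainder_zero, Function.iterate_zero_apply]
  | succ k ih =>
    ext y
    rw [Function.iterate_succ_apply', rescaledRemainder, ← ih, ← expansionCoeff,
      asymptoticRemainder_eq_add_smul f _ k hh, add_sub_cancel_left, inv_smul_smul₀ hh]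

variable {E : Type*} {F : Type u} [NormedAddCommGroup E] [NormedSpace ℝ E]
  [NormedAddCommGroup F] [NormedSpace ℝ F] {I : Set ℝ}

namespace DerivBounded

theorem principal_prod_of_forall_le {d : ℕ} {K : Set E} {f : ℝ × E → E → F} {x : ℝ × E → E}
    (hI : I ⊆ Ioi 0) (h0 : DerivBounded d (𝓝[I] 0 ×ˢ 𝓟 K) f x)
    (hδ : ∀ δ > 0, DerivBounded d (𝓟 ((I ∩ Ici δ) ×ˢ K)) f x) :
    DerivBounded d (𝓟 (I ×ˢ K)) f x := by
  obtain ⟨C, hC⟩ := h0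
  obtain ⟨δ, hδ0, hδC⟩ := exists_forall_le_of_eventually_nhdsWithin_zero hI
    (eventually_prod_principal_iff.1 hC)
  have hsmall : DerivBounded d (𝓟 ((I ∩ Iic δ) ×ˢ K)) f x :=
    ⟨C, eventually_principal.2 fun p hp => hδC p.1 hp.1.1 hp.1.2 p.2 hp.2⟩
  have hsup := hsmall.sup (hδ δ hδ0)
  rwa [sup_principal, ← union_prod, ← inter_union_distrib_left, Iic_union_Ici, inter_univ] at hsup

end DerivBounded

/-- The family `f` has asymptotic expansions of all orders near each point of `V`, and its
derivatives are bounded on compact subsets of `V`, uniformly in all `h ∈ I`. -/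
structure IsExpandableOn {E F : Type*} [NormedAddCommGroup E] [NormedSpace ℝ E]
    [NormedAddCommGroup F] [NormedSpace ℝ F] (I : Set ℝ) (V : Set E) (f : ℝ → E → F) : Prop where
  hasExpansionAt : ∀ y ∈ V, ∀ N, HasExpansionAt I y N f
  derivBounded : ∀ K ⊆ V, IsCompact K → ∀ d,
    DerivBounded d (𝓟 (I ×ˢ K)) (fun p => f p.1) Prod.snd

theorem IsExpandableOn.ite_zero {V : Set E} {f : ℝ → E → F} {δ : ℝ} (hδ : 0 < δ)
    (hf : IsExpandableOn (I ∩ Iic δ) V f) :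
    IsExpandableOn I V fun h => if h ≤ δ then f h else 0 := by
  refine ⟨fun y hy N => ((hf.hasExpansionAt y hy N).mono ?_).congr ?_, fun K hKV hK d => ?_⟩
  · rw [nhdsWithin_inter_of_mem' (mem_nhdsWithin_of_mem_nhds (Iic_mem_nhds hδ))]
  · filter_upwards [Eventually.prod_inl (mem_nhdsWithin_of_mem_nhds (Iic_mem_nhds hδ)) (𝓝 y)]
      with p hp
    rw [if_pos hp]
  · have hsmall := (hf.derivBounded K hKV hK d).congr
      (f' := fun p => if p.1 ≤ δ then f p.1 else 0)
      (eventually_principal.2 fun p hp => .of_eq (if_pos hp.1.2))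
    have hlarge : DerivBounded d (𝓟 ((I ∩ Ioi δ) ×ˢ K))
        (fun p => if p.1 ≤ δ then f p.1 else 0) Prod.snd :=
      (DerivBounded.const (c := fun _ => (0 : F)) ⟨0, by simp⟩).congr
        (eventually_principal.2 fun p hp => .of_eq (if_neg (not_le.2 hp.1.2)))
    have hsup := hsmall.sup hlarge
    rwa [sup_principal, ← union_prod, ← inter_union_distrib_left, Iic_union_Ioi, inter_univ]
      at hsup

variable [ProperSpace E] [FiniteDimensional ℝ F] {x₀ : E} {N : ℕ} {f : ℝ → E → F}

namespace HasExpansionAt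

theorem leadingTerm_eventuallyEq [(𝓝[I] (0 : ℝ)).NeBot] {f₀ : E → F} {g : ℝ → E → F}
    (hg : HasExpansionAt I x₀ N g)
    (hfg : ∀ᶠ p : ℝ × E in 𝓝[I] 0 ×ˢ 𝓝 x₀, f p.1 p.2 = f₀ p.2 + p.1 • g p.1 p.2) :
    leadingTerm I f =ᶠ[𝓝 x₀] f₀ := by
  obtain ⟨C, hC⟩ := hg.order_zero 0
  obtain ⟨pa, ha, pb, hb, hab⟩ := eventually_prod_iff.1 (hC.and hfg)
  filter_upwards [hb] with y hy
  have hid : Tendsto (fun h : ℝ => h) (𝓝[I] 0) (𝓝 0) := nhdsWithin_le_nhds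
  have hbdd : IsBoundedUnder (· ≤ ·) (𝓝[I] 0) fun h => ‖g h y‖ :=
    isBoundedUnder_of_eventually_le (a := C) <| ha.mono fun h hh => by
      simpa using (hab hh hy).1.2 0 le_rfl
  have hlim : Tendsto (fun h => f₀ y + h • g h y) (𝓝[I] 0) (𝓝 (f₀ y)) := by
    simpa using (hid.zero_smul_isBoundedUnder_le hbdd).const_add (f₀ y)
  exact (hlim.congr' (ha.mono fun h hh => (hab hh hy).2.symm)).limUnder_eq

theorem rescaledRemainder [(𝓝[I] (0 : ℝ)).NeBot] (hI : I ⊆ Ioi 0)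
    (hf : HasExpansionAt I x₀ (N + 1) f) : HasExpansionAt I x₀ N (rescaledRemainder I f) := by
  obtain ⟨f₀, g, -, hg, hfg⟩ := hf
  refine hg.congr ?_
  filter_upwards [hfg, (hg.leadingTerm_eventuallyEq hfg).prod_inr (𝓝[I] 0),
    Eventually.prod_inl self_mem_nhdsWithin (𝓝 x₀)] with p hp hlead hpI
  rw [_root_.rescaledRemainder, hlead, hp, add_sub_cancel_left, inv_smul_smul₀ (hI hpI).ne']

end HasExpansionAt

namespace IsExpandableOn

variable {V : Set E}

theorem contDiffOn_leadingTerm [(𝓝[I] (0 : ℝ)).NeBot] (hf : IsExpandableOn I V f) :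
    ContDiffOn ℝ ∞ (leadingTerm I f) V := by
  intro y hy
  obtain ⟨f₀, g, hf₀, hg, hfg⟩ := hf.hasExpansionAt y hy 1
  exact (hf₀.contDiffAt.congr_of_eventuallyEq (hg.leadingTerm_eventuallyEq hfg)).contDiffWithinAt

theorem rescaledRemainder [(𝓝[I] (0 : ℝ)).NeBot] (hI : I ⊆ Ioi 0) (hV : IsOpen V)
    (hf : IsExpandableOn I V f) : IsExpandableOn I V (rescaledRemainder I f) := by
  have hexp (y) (hy : y ∈ V) (N) := (hf.hasExpansionAt y hy (N + 1)).rescaledRemainder hI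
  refine ⟨hexp, fun K hKV hK d => .principal_prod_of_forall_le hI
    (.prod_principal hK fun y hy => hexp y (hKV hy) 0 d) fun δ hδ => ?_⟩
  have hlead : DerivBounded d (𝓟 ((I ∩ Ici δ) ×ˢ K)) (fun _ => leadingTerm I f) Prod.snd :=
    .of_isCompact hK (fun y hy => contDiffAt_infty.1
      (hf.contDiffOn_leadingTerm.contDiffAt (hV.mem_nhds (hKV hy))) d)
      (eventually_principal.2 fun p hp => hp.2)
  have hinv : DerivBounded d (𝓟 ((I ∩ Ici δ) ×ˢ K)) (fun p (_ : E) => p.1⁻¹) Prod.snd := by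
    refine .const ⟨δ⁻¹, eventually_principal.2 fun p hp => ?_⟩
    rw [norm_inv, Real.norm_of_nonneg (hI hp.1.1).le]
    exact inv_anti₀ hδ hp.1.2
  have hfδ := (hf.derivBounded K hKV hK d).mono
    (principal_mono.2 (prod_mono_left (inter_subset_left (t := Ici δ))))
  exact (hfδ.prodMk (hlead.prodMk hinv)).contDiff_comp
    (g := fun q : F × F × ℝ => q.2.2 • (q.1 - q.2.1)) (by fun_prop)

theorem iterate_rescaledRemainder [(𝓝[I] (0 : ℝ)).NeBot] (hI : I ⊆ Ioi 0) (hV : IsOpen V)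
    (hf : IsExpandableOn I V f) (k : ℕ) :
    IsExpandableOn I V ((_root_.rescaledRemainder I)^[k] f) := by
  induction k with
  | zero => exact hf
  | succ k ih =>
    rw [Function.iterate_succ_apply']
    exact ih.rescaledRemainder hI hV

theorem hasSmoothExpansionOn [(𝓝[I] (0 : ℝ)).NeBot] (hI : I ⊆ Ioi 0) (hV : IsOpen V)
    (hf : IsExpandableOn I V f) : HasSmoothExpansionOn I V f (expansionCoeff I f) := by
  refine (hasSmoothExpansionOn_iff hI hV).2 ⟨fun h hh y hy => ?_,
    fun k => (hf.iterate_rescaledRemainder hI hV k).contDiffOn_leadingTerm, fun N K hKV hK d => ?_⟩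
  · refine (contDiffAt_infty.2 fun d => ?_).contDiffWithinAt
    obtain ⟨C, hC⟩ := hf.derivBounded {y} (singleton_subset_iff.2 hy) isCompact_singleton d
    exact (eventually_principal.1 hC (h, y) ⟨hh, rfl⟩).1
  · refine ((hf.iterate_rescaledRemainder hI hV (N + 1)).derivBounded K hKV hK d).congr ?_
    exact eventually_principal.2 fun p hp =>
      .of_eq (asymptoticRemainder_expansionCoeff I f (N + 1) (hI hp.1).ne')

end IsExpandableOn

end Globalization

section C1Convergence

theorem eventually_forall_mem_of_isCompact {ι Y : Type*} [TopologicalSpace Y] {l : Filter ι}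
    {K : Set Y} (hK : IsCompact K) {P : ι → Y → Prop}
    (hP : ∀ y ∈ K, ∀ᶠ p in l ×ˢ 𝓝 y, P p.1 p.2) : ∀ᶠ i in l, ∀ y ∈ K, P i y := by
  have hnhdsSet : ∀ᶠ p in l ×ˢ 𝓝ˢ K, P p.1 p.2 := by
    rw [hK.prod_nhdsSet_eq_biSup]
    simpa only [eventually_iSup] using hP
  exact hnhdsSet.curry.mono fun _ h => h.self_of_nhdsSet

/-- The maps `G i` and their derivatives converge, along `l` and uniformly near `x₀`, to `G₀` and
its derivative. Uniformity is encoded by letting the base point tend to `x₀` independently of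
`i`. -/
structure C1ConvergesAt {ι E F : Type*} [NormedAddCommGroup E] [NormedSpace ℝ E]
    [NormedAddCommGroup F] [NormedSpace ℝ F] (l : Filter ι) (G : ι → E → F) (G₀ : E → F)
    (x₀ : E) : Prop where
  differentiableAt : ∀ᶠ p in l ×ˢ 𝓝 x₀, DifferentiableAt ℝ (G p.1) p.2
  tendsto : Tendsto (fun p : ι × E => G p.1 p.2) (l ×ˢ 𝓝 x₀) (𝓝 (G₀ x₀))
  tendsto_fderiv :
    Tendsto (fun p : ι × E => fderiv ℝ (G p.1) p.2) (l ×ˢ 𝓝 x₀) (𝓝 (fderiv ℝ G₀ x₀))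

namespace C1ConvergesAt

variable {ι E F : Type*} [NormedAddCommGroup E] [NormedSpace ℝ E]
  [NormedAddCommGroup F] [NormedSpace ℝ F] {l : Filter ι} {G : ι → E → F} {G₀ : E → F} {x₀ : E}

theorem of_eq_add_smul {I : Set ℝ} {f g : ℝ → E → F} {f₀ : E → F} (hf₀ : ContDiffAt ℝ 1 f₀ x₀)
    (hg : DerivBounded 1 (𝓝[I] 0 ×ˢ 𝓝 x₀) (fun p : ℝ × E => g p.1) Prod.snd)
    (hfg : ∀ᶠ p : ℝ × E in 𝓝[I] 0 ×ˢ 𝓝 x₀, f p.1 p.2 = f₀ p.2 + p.1 • g p.1 p.2) :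
    C1ConvergesAt (𝓝[I] 0) f f₀ x₀ := by
  obtain ⟨C, hC⟩ := hg
  have hfst : Tendsto (fun p : ℝ × E => p.1) (𝓝[I] 0 ×ˢ 𝓝 x₀) (𝓝 0) := tendsto_fst_nhdsWithin_prod
  have hbdd : IsBoundedUnder (· ≤ ·) (𝓝[I] 0 ×ˢ 𝓝 x₀) fun p => ‖g p.1 p.2‖ :=
    isBoundedUnder_of_eventually_le (a := C) <| hC.mono fun p hp => by
      simpa using hp.2 0 zero_le_one
  have hbdd' : IsBoundedUnder (· ≤ ·) (𝓝[I] 0 ×ˢ 𝓝 x₀) fun p => ‖fderiv ℝ (g p.1) p.2‖ :=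
    isBoundedUnder_of_eventually_le (a := C) <| hC.mono fun p hp => by
      simpa [norm_iteratedFDeriv_one] using hp.2 1 le_rfl
  have hderiv : ∀ᶠ p : ℝ × E in 𝓝[I] 0 ×ˢ 𝓝 x₀,
      HasFDerivAt (f p.1) (fderiv ℝ f₀ p.2 + p.1 • fderiv ℝ (g p.1) p.2) p.2 := by
    filter_upwards [hC, (hf₀.eventually (by simp)).prod_inr (𝓝[I] 0),
      eventually_prod_nhds_eventually_nhds hfg] with p hp hp₀ hpf
    exact ((hp₀.differentiableAt one_ne_zero).hasFDerivAt.add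
      ((hp.1.differentiableAt (by simp)).hasFDerivAt.const_smul p.1)).congr_of_eventuallyEq hpf
  refine ⟨hderiv.mono fun p hp => hp.differentiableAt, ?_, ?_⟩
  · have hlim := (hf₀.continuousAt.tendsto.comp tendsto_snd).add
      (hfst.zero_smul_isBoundedUnder_le hbdd)
    rw [add_zero] at hlim
    exact hlim.congr' (hfg.mono fun p hp => hp.symm)
  · have hlim := ((hf₀.fderiv_right (m := 0) (by simp)).continuousAt.tendsto.comp tendsto_snd).add
      (hfst.zero_smul_isBoundedUnder_le hbdd')
    rw [add_zero] at hlim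
    exact hlim.congr' (hderiv.mono fun p hp => hp.fderiv.symm)

theorem eventually_approximatesLinearOn (hG : C1ConvergesAt l G G₀ x₀) {c : ℝ≥0} (hc : 0 < c) :
    ∃ r > 0, ∀ᶠ i in l, ApproximatesLinearOn (G i) (fderiv ℝ G₀ x₀) (ball x₀ r) c := by
  have hderiv : ∀ᶠ p in l ×ˢ 𝓝 x₀, DifferentiableAt ℝ (G p.1) p.2 ∧
      ‖fderiv ℝ (G p.1) p.2 - fderiv ℝ G₀ x₀‖ ≤ c := by
    filter_upwards [hG.differentiableAt,
      hG.tendsto_fderiv.eventually (closedBall_mem_nhds _ (NNReal.coe_pos.2 hc))] with p hp hp'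
    exact ⟨hp, by simpa [dist_eq_norm] using hp'⟩
  obtain ⟨pa, ha, pb, hb, hab⟩ := eventually_prod_iff.1 hderiv
  obtain ⟨r, hr, hrb⟩ := Metric.eventually_nhds_iff_ball.1 hb
  refine ⟨r, hr, ?_⟩
  filter_upwards [ha] with i hi x hx y hy
  exact (convex_ball x₀ r).norm_image_sub_le_of_norm_hasFDerivWithin_le'
    (fun z hz => (hab hi (hrb z hz)).1.hasFDerivAt.hasFDerivWithinAt)
    (fun z hz => (hab hi (hrb z hz)).2) hy hx

theorem eventually_injOn_ball (hG : C1ConvergesAt l G G₀ x₀)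
    (hinv : (fderiv ℝ G₀ x₀).IsInvertible) : ∃ r > 0, ∀ᶠ i in l, InjOn (G i) (ball x₀ r) := by
  obtain ⟨e, he⟩ := hinv
  rcases subsingleton_or_nontrivial E with hE | hE
  · exact ⟨1, one_pos, .of_forall fun i => injOn_of_subsingleton _ _⟩
  have hpos : 0 < ‖(e.symm : F →L[ℝ] E)‖₊⁻¹ := inv_pos.2 e.nnnorm_symm_pos
  obtain ⟨r, hr, happrox⟩ := hG.eventually_approximatesLinearOn (half_pos hpos)
  refine ⟨r, hr, happrox.mono fun i hi => ?_⟩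
  rw [← he] at hi
  exact hi.injOn (.inr (NNReal.half_lt_self hpos.ne'))

theorem eventually_eq_imp_eq {a b : E} (ha : C1ConvergesAt l G G₀ a) (hb : C1ConvergesAt l G G₀ b)
    (hinv : (fderiv ℝ G₀ a).IsInvertible) (hab : G₀ a = G₀ b → a = b) :
    ∀ᶠ p in l ×ˢ 𝓝 (a, b), G p.1 p.2.1 = G p.1 p.2.2 → p.2.1 = p.2.2 := by
  have hfst : Tendsto (fun p : ι × E × E => (p.1, p.2.1)) (l ×ˢ 𝓝 (a, b)) (l ×ˢ 𝓝 a) :=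
    tendsto_fst.prodMk ((continuous_fst.tendsto (a, b)).comp tendsto_snd)
  have hsnd : Tendsto (fun p : ι × E × E => (p.1, p.2.2)) (l ×ˢ 𝓝 (a, b)) (l ×ˢ 𝓝 b) :=
    tendsto_fst.prodMk ((continuous_snd.tendsto (a, b)).comp tendsto_snd)
  rcases eq_or_ne (G₀ a) (G₀ b) with heq | hne
  · obtain rfl := hab heq
    obtain ⟨r, hr, hinj⟩ := ha.eventually_injOn_ball hinv
    have hball : ∀ᶠ q : ι × E in l ×ˢ 𝓝 a, q.2 ∈ ball a r :=
      tendsto_snd.eventually (ball_mem_nhds a hr)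
    filter_upwards [hinj.prod_inl _, hfst.eventually hball, hsnd.eventually hball] with p hp ha hb
    exact hp ha hb
  · have hne' := ((ha.tendsto.comp hfst).prodMk_nhds (hb.tendsto.comp hsnd)).eventually
      (isClosed_diagonal.isOpen_compl.mem_nhds hne)
    exact hne'.mono fun p hp h => absurd h hp

theorem eventually_injOn_of_isCompact {K : Set E} (hK : IsCompact K)
    (hG : ∀ x ∈ K, C1ConvergesAt l G G₀ x) (hinj : InjOn G₀ K)
    (hinv : ∀ x ∈ K, (fderiv ℝ G₀ x).IsInvertible) : ∀ᶠ i in l, InjOn (G i) K := by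
  have hpair := eventually_forall_mem_of_isCompact (hK.prod hK)
    (P := fun i q => G i q.1 = G i q.2 → q.1 = q.2) fun q hq =>
      (hG q.1 hq.1).eventually_eq_imp_eq (hG q.2 hq.2) (hinv q.1 hq.1) (hinj hq.1 hq.2)
  exact hpair.mono fun i hi a ha b hb => hi (a, b) ⟨ha, hb⟩

theorem exists_isCompact_eventually_fderiv_mem [FiniteDimensional ℝ E] [FiniteDimensional ℝ F]
    {K : Set E} (hK : IsCompact K) (hG : ∀ x ∈ K, C1ConvergesAt l G G₀ x)
    (hcont : ContinuousOn (fderiv ℝ G₀) K) {O : Set (E →L[ℝ] F)} (hO : IsOpen O)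
    (hKO : ∀ x ∈ K, fderiv ℝ G₀ x ∈ O) :
    ∃ 𝒦 ⊆ O, IsCompact 𝒦 ∧ ∀ᶠ i in l, ∀ x ∈ K, fderiv ℝ (G i) x ∈ 𝒦 := by
  obtain ⟨𝒦, h𝒦, hK𝒦, h𝒦O⟩ := exists_compact_between (hK.image_of_continuousOn hcont) hO
    (image_subset_iff.2 hKO)
  exact ⟨𝒦, h𝒦O, h𝒦, eventually_forall_mem_of_isCompact hK fun x hx =>
    (hG x hx).tendsto_fderiv.eventually
      (mem_interior_iff_mem_nhds.1 (hK𝒦 (mem_image_of_mem _ hx)))⟩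

variable [CompleteSpace E]

theorem eventually_exists_eq (hG : C1ConvergesAt l G G₀ x₀)
    (hinv : (fderiv ℝ G₀ x₀).IsInvertible) {W : Set E} (hW : W ∈ 𝓝 x₀) :
    ∀ᶠ p in l ×ˢ 𝓝 (G₀ x₀), ∃ x ∈ W, G p.1 x = p.2 := by
  obtain ⟨e, he⟩ := hinv
  rcases subsingleton_or_nontrivial F with hF | hF
  · exact .of_forall fun p => ⟨x₀, mem_of_mem_nhds hW, Subsingleton.elim _ _⟩
  have hE : Nontrivial E := e.symm.injective.nontrivial
  let c : ℝ≥0 := e.toNonlinearRightInverse.nnnorm⁻¹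
  have hc : 0 < c := inv_pos.2 e.nnnorm_symm_pos
  obtain ⟨r, hr, happrox⟩ := hG.eventually_approximatesLinearOn (half_pos hc)
  obtain ⟨s, hs, hsW⟩ := nhds_basis_closedBall.mem_iff.1 (inter_mem hW (ball_mem_nhds x₀ hr))
  have hρ : 0 < ((c : ℝ) - (c / 2 : ℝ≥0)) * s :=
    mul_pos (sub_pos.2 (NNReal.coe_lt_coe.2 (NNReal.half_lt_self hc.ne'))) hs
  have hlim : Tendsto (fun p : ι × F => dist p.2 (G p.1 x₀)) (l ×ˢ 𝓝 (G₀ x₀)) (𝓝 0) := by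
    have hGx₀ : Tendsto (fun i => G i x₀) l (𝓝 (G₀ x₀)) :=
      hG.tendsto.comp (tendsto_id.prodMk (tendsto_const_pure.mono_right (pure_le_nhds x₀)))
    have hdist := (tendsto_snd (f := l) (g := 𝓝 (G₀ x₀))).dist (hGx₀.comp tendsto_fst)
    rwa [dist_self] at hdist
  filter_upwards [hlim.eventually_lt_const hρ, happrox.prod_inl _] with p hp happ
  rw [← he] at happ
  obtain ⟨x, hx, hxp⟩ := happ.surjOn_closedBall_of_nonlinearRightInverse
    e.toNonlinearRightInverse hs.le (hsW.trans inter_subset_right) (mem_closedBall.2 hp.le)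
  exact ⟨x, (hsW hx).1, hxp⟩

variable {H : ι → F → E}

theorem tendsto_leftInverse (hG : C1ConvergesAt l G G₀ x₀)
    (hinv : (fderiv ℝ G₀ x₀).IsInvertible)
    (hH : ∀ᶠ p in l ×ˢ 𝓝 x₀, H p.1 (G p.1 p.2) = p.2) :
    Tendsto (fun p : ι × F => H p.1 p.2) (l ×ˢ 𝓝 (G₀ x₀)) (𝓝 x₀) := by
  obtain ⟨pa, ha, pb, hb, hab⟩ := eventually_prod_iff.1 hH
  refine tendsto_def.2 fun W hW => ?_
  filter_upwards [ha.prod_inl _, hG.eventually_exists_eq hinv (inter_mem hW hb)] with p hp hex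
  obtain ⟨x, ⟨hxW, hxb⟩, hxp⟩ := hex
  rwa [mem_preimage, ← hxp, hab hp hxb]

theorem eventually_rightInverse (hG : C1ConvergesAt l G G₀ x₀)
    (hinv : (fderiv ℝ G₀ x₀).IsInvertible)
    (hH : ∀ᶠ p in l ×ˢ 𝓝 x₀, H p.1 (G p.1 p.2) = p.2) :
    ∀ᶠ p in l ×ˢ 𝓝 (G₀ x₀), G p.1 (H p.1 p.2) = p.2 := by
  obtain ⟨pa, ha, pb, hb, hab⟩ := eventually_prod_iff.1 hH
  filter_upwards [ha.prod_inl _, hG.eventually_exists_eq hinv hb] with p hp hex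
  obtain ⟨x, hxb, hxp⟩ := hex
  rw [← hxp, hab hp hxb]

end C1ConvergesAt

end C1Convergence

section InverseFamily

theorem derivBounded_of_fderiv_eq_inverse {ι E F : Type*} [NormedAddCommGroup E] [NormedSpace ℝ E]
    [CompleteSpace E] [NormedAddCommGroup F] [NormedSpace ℝ F] {l : Filter ι} {G : ι → E → F}
    {H : ι → F → E} {y : ι → F} (hG : ∀ d, DerivBounded d l G fun i => H i (y i))
    {𝒦 : Set (E →L[ℝ] F)} (h𝒦 : IsCompact 𝒦) (h𝒦inv : ∀ A ∈ 𝒦, A.IsInvertible)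
    (hmem : ∀ᶠ i in l, fderiv ℝ (G i) (H i (y i)) ∈ 𝒦)
    (hH : ∀ᶠ i in l, ∀ᶠ z in 𝓝 (y i), ContDiffAt ℝ ∞ (H i) z ∧
      fderiv ℝ (H i) z = (fderiv ℝ (G i) (H i z)).inverse)
    (hbdd : ∃ C, ∀ᶠ i in l, ‖H i (y i)‖ ≤ C) (d : ℕ) : DerivBounded d l H y := by
  have hsmooth : ∀ᶠ i in l, ContDiffAt ℝ ∞ (H i) (y i) := hH.mono fun i hi => hi.self_of_nhds.1
  induction d with
  | zero =>
    refine .of_forall_le (hsmooth.mono fun i hi => contDiffAt_infty.1 hi 0) fun k hk => ?_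
    obtain rfl : k = 0 := Nat.le_zero.1 hk
    simpa using hbdd
  | succ d ih =>
    refine .of_fderiv (hsmooth.mono fun i hi => contDiffAt_infty.1 hi _) hbdd ?_
    have hinverse : DerivBounded d l (fun _ => ContinuousLinearMap.inverse)
        fun i => fderiv ℝ (G i) (H i (y i)) :=
      .of_isCompact h𝒦 (fun A hA => (h𝒦inv A hA).contDiffAt_map_inverse) hmem
    exact ((hinverse.comp (hG (d + 1)).fderiv).comp ih).congr
      (hH.mono fun i hi => hi.mono fun z hz => hz.2)

namespace HasSmoothExpansionOn

section

variable {E F : Type*} [NormedAddCommGroup E] [NormedSpace ℝ E] [NormedAddCommGroup F]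
  [NormedSpace ℝ F] {I J : Set ℝ} {U : Set E} {Gh : ℝ → E → F} {Gc : ℕ → E → F}

theorem mono (hexp : HasSmoothExpansionOn I U Gh Gc) (hJI : J ⊆ I) :
    HasSmoothExpansionOn J U Gh Gc := by
  refine ⟨fun h hh => hexp.1 h (hJI hh), hexp.2.1, fun N K hKU hK d => ?_⟩
  obtain ⟨C, hC, hbound⟩ := hexp.2.2 N K hKU hK d
  exact ⟨C, hC, fun h hh => hbound h (hJI hh)⟩

theorem derivBounded [FiniteDimensional ℝ F] (hexp : HasSmoothExpansionOn I U Gh Gc)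
    (hI : I ⊆ Ioi 0) (hIb : BddAbove I) (hU : IsOpen U) {K : Set E} (hKU : K ⊆ U)
    (hK : IsCompact K) (d : ℕ) :
    DerivBounded d (𝓟 (I ×ˢ K)) (fun p => Gh p.1) Prod.snd := by
  obtain ⟨M, hM⟩ := hIb
  have hlead : DerivBounded d (𝓟 (I ×ˢ K)) (fun _ => Gc 0) Prod.snd :=
    .of_isCompact hK (fun x hx => contDiffAt_infty.1
      ((hexp.2.1 0).contDiffAt (hU.mem_nhds (hKU hx))) d) (eventually_principal.2 fun p hp => hp.2)
  have hparam : DerivBounded d (𝓟 (I ×ˢ K)) (fun p (_ : E) => p.1) Prod.snd := by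
    refine .const ⟨M, eventually_principal.2 fun p hp => ?_⟩
    rw [Real.norm_of_nonneg (hI hp.1).le]
    exact hM hp.1
  refine ((hlead.prodMk (hparam.prodMk
    (hexp.derivBounded_remainder hI hU hKU hK 0 d))).contDiff_comp
      (g := fun q : F × ℝ × F => q.1 + q.2.1 • q.2.2) (by fun_prop)).congr ?_
  refine eventually_principal.2 fun p hp => .of_forall fun x => ?_
  have hsplit := asymptoticRemainder_eq_add_smul Gh Gc 0 (hI hp.1).ne' x
  rwa [asymptoticRemainder_zero] at hsplit

theorem c1ConvergesAt [FiniteDimensional ℝ E] (hexp : HasSmoothExpansionOn I U Gh Gc)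
    (hI : I ⊆ Ioi 0) (hU : IsOpen U) {x₀ : E} (hx₀ : x₀ ∈ U) :
    C1ConvergesAt (𝓝[I] 0) Gh (Gc 0) x₀ :=
  .of_eq_add_smul (contDiffAt_infty.1 ((hexp.2.1 0).contDiffAt (hU.mem_nhds hx₀)) 1)
    (hexp.hasExpansionAt_remainder hI hU hx₀ 0 0 1)
    (eventually_eq_add_smul_asymptoticRemainder Gh Gc hI (𝓝 x₀))

theorem eventually_subset_image [FiniteDimensional ℝ E] {W : Set E} {A : Set F}
    (hexp : HasSmoothExpansionOn I U Gh Gc) (hI : I ⊆ Ioi 0) (hU : IsOpen U)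
    (hinv : ∀ x ∈ U, (fderiv ℝ (Gc 0) x).IsInvertible) (hW : IsOpen W)
    (hWU : W ⊆ U) (hA : IsCompact A) (hAW : A ⊆ Gc 0 '' W) : ∀ᶠ h in 𝓝[I] 0, A ⊆ Gh h '' W := by
  refine eventually_forall_mem_of_isCompact hA (P := fun h y => y ∈ Gh h '' W) fun y hy => ?_
  obtain ⟨x, hx, rfl⟩ := hAW hy
  exact (hexp.c1ConvergesAt hI hU (hWU hx)).eventually_exists_eq (hinv x (hWU hx)) (hW.mem_nhds hx)

end

variable {E F : Type u} [NormedAddCommGroup E] [NormedSpace ℝ E] [FiniteDimensional ℝ E]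
  [NormedAddCommGroup F] [NormedSpace ℝ F] [FiniteDimensional ℝ F] {I : Set ℝ} {U W L : Set E}
  {V A : Set F} {Gh : ℝ → E → F} {Gc : ℕ → E → F} {Fh : ℝ → F → E} {Fc : ℕ → F → E}

theorem derivBounded_leftInverse (hexp : HasSmoothExpansionOn I U Gh Gc) (hI : I ⊆ Ioi 0)
    (hIb : BddAbove I) (hU : IsOpen U) (hW : IsOpen W) (hWL : W ⊆ L) (hL : IsCompact L)
    (hLU : L ⊆ U) {𝒦 : Set (E →L[ℝ] F)} (h𝒦 : IsCompact 𝒦) (h𝒦inv : ∀ A ∈ 𝒦, A.IsInvertible)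
    (hmem : ∀ h ∈ I, ∀ x ∈ W, fderiv ℝ (Gh h) x ∈ 𝒦) (hF : ∀ h ∈ I, LeftInvOn (Fh h) (Gh h) W)
    (hV : ∀ h ∈ I, V ⊆ Gh h '' W) (d : ℕ) :
    DerivBounded d (𝓟 (I ×ˢ V)) (fun p => Fh p.1) Prod.snd := by
  have hWU := hWL.trans hLU
  have hFW {p : ℝ × F} (hp : p ∈ I ×ˢ V) : Fh p.1 p.2 ∈ W := by
    obtain ⟨x, hx, hxp⟩ := hV p.1 hp.1 hp.2
    rwa [← hxp, hF p.1 hp.1 hx]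
  refine derivBounded_of_fderiv_eq_inverse (G := fun p => Gh p.1) (fun d => ?_) h𝒦 h𝒦inv
    (eventually_principal.2 fun p hp => hmem p.1 hp.1 _ (hFW hp))
    (eventually_principal.2 fun p hp => ?_) ?_ d
  · exact (hexp.derivBounded hI hIb hU hLU hL d).comp_tendsto (φ := fun p => (p.1, Fh p.1 p.2))
      (tendsto_principal_principal.2 fun p hp => ⟨hp.1, hWL (hFW hp)⟩)
  · have hinv : ∀ x ∈ W, (fderiv ℝ (Gh p.1) x).IsInvertible :=
      fun x hx => h𝒦inv _ (hmem p.1 hp.1 x hx)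
    have himage : IsOpen (Gh p.1 '' W) :=
      isOpen_image_of_isInvertible_fderiv hW ((hexp.1 p.1 hp.1).mono hWU) hinv
    filter_upwards [himage.mem_nhds (hV p.1 hp.1 hp.2)]
    rintro _ ⟨x, hx, rfl⟩
    have hFx := contDiffAt_and_fderiv_of_eventually_leftInverse
      ((hexp.1 p.1 hp.1).contDiffAt (hU.mem_nhds (hWU hx))) (hinv x hx)
      (eventually_of_mem (hW.mem_nhds hx) (hF p.1 hp.1))
    rwa [hF p.1 hp.1 hx]
  · obtain ⟨C, hC⟩ := hL.isBounded.exists_norm_le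
    exact ⟨C, eventually_principal.2 fun p hp => hC _ (hWL (hFW hp))⟩

theorem hasExpansionAt_leftInverse (hexp : HasSmoothExpansionOn I U Gh Gc) (hI : I ⊆ Ioi 0)
    (hU : IsOpen U) (hinj : InjOn (Gc 0) U) (hinv : ∀ x ∈ U, (fderiv ℝ (Gc 0) x).IsInvertible)
    {x₀ : E} (hx₀ : x₀ ∈ U) (hF : ∀ᶠ p : ℝ × E in 𝓝[I] 0 ×ˢ 𝓝 x₀, Fh p.1 (Gh p.1 p.2) = p.2)
    (hFb : HasExpansionAt I (Gc 0 x₀) 0 Fh) (N : ℕ) : HasExpansionAt I (Gc 0 x₀) N Fh := by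
  obtain ⟨Φ, hΦ, hΦG⟩ := exists_contDiff_eventually_leftInverse hU (hexp.2.1 0) hinj hinv hx₀
  have hconv := hexp.c1ConvergesAt hI hU hx₀
  have hlim := hconv.tendsto_leftInverse (hinv x₀ hx₀) hF
  refine .of_rightInverse (hexp.hasExpansionAt_remainder hI hU hx₀ 0) hΦ hΦG hFb hlim ?_ N
  filter_upwards [(tendsto_fst.prodMk hlim).eventually
    (eventually_eq_add_smul_asymptoticRemainder Gh Gc hI (𝓝 x₀)),
    hconv.eventually_rightInverse (hinv x₀ hx₀) hF] with p hp hGF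
  rw [← hp, hGF]

theorem isExpandableOn_leftInverse (hexp : HasSmoothExpansionOn I U Gh Gc) (hI : I ⊆ Ioi 0)
    (hIb : BddAbove I) (hU : IsOpen U) (hinj : InjOn (Gc 0) U)
    (hinv : ∀ x ∈ U, (fderiv ℝ (Gc 0) x).IsInvertible) (hW : IsOpen W) (hWL : W ⊆ L)
    (hL : IsCompact L) (hLU : L ⊆ U) {𝒦 : Set (E →L[ℝ] F)} (h𝒦 : IsCompact 𝒦)
    (h𝒦inv : ∀ A ∈ 𝒦, A.IsInvertible) (hmem : ∀ h ∈ I, ∀ x ∈ W, fderiv ℝ (Gh h) x ∈ 𝒦)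
    (hF : ∀ h ∈ I, LeftInvOn (Fh h) (Gh h) W) (hV : IsOpen V) (hVG : V ⊆ Gc 0 '' W)
    (hVGh : ∀ h ∈ I, V ⊆ Gh h '' W) : IsExpandableOn I V Fh := by
  have hFb := hexp.derivBounded_leftInverse hI hIb hU hW hWL hL hLU h𝒦 h𝒦inv hmem hF hVGh
  refine ⟨fun y hy N => ?_, fun K hKV _ d => (hFb d).mono (principal_mono.2 (prod_mono_right hKV))⟩
  obtain ⟨x, hx, rfl⟩ := hVG hy
  refine hexp.hasExpansionAt_leftInverse hI hU hinj hinv (hLU (hWL hx)) ?_ (fun d => ?_) N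
  · filter_upwards [prod_mem_prod self_mem_nhdsWithin (hW.mem_nhds hx)] with p hp
    exact hF p.1 hp.1 hp.2
  · exact (hFb d).mono
      (le_principal_iff.2 (prod_mem_prod self_mem_nhdsWithin (hV.mem_nhds hy)))

theorem exists_isCompact_eventually_injOn_fderiv_mem (hexp : HasSmoothExpansionOn I U Gh Gc)
    (hI : I ⊆ Ioi 0) (hU : IsOpen U) (hinj : InjOn (Gc 0) U)
    (hinv : ∀ x ∈ U, (fderiv ℝ (Gc 0) x).IsInvertible) (hL : IsCompact L) (hLU : L ⊆ U) :
    ∃ 𝒦 : Set (E →L[ℝ] F), IsCompact 𝒦 ∧ (∀ A ∈ 𝒦, A.IsInvertible) ∧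
      ∀ᶠ h in 𝓝[I] 0, InjOn (Gh h) L ∧ ∀ x ∈ L, fderiv ℝ (Gh h) x ∈ 𝒦 := by
  have hconv (x) (hx : x ∈ L) := hexp.c1ConvergesAt hI hU (hLU hx)
  obtain ⟨𝒦, h𝒦inv, h𝒦, hmem⟩ := C1ConvergesAt.exists_isCompact_eventually_fderiv_mem hL hconv
    (((hexp.2.1 0).continuousOn_fderiv_of_isOpen hU (by simp)).mono hLU)
    (ContinuousLinearEquiv.isOpen (𝕜 := ℝ) (E := E) (F := F)) fun x hx => hinv x (hLU hx)
  exact ⟨𝒦, h𝒦, h𝒦inv, (C1ConvergesAt.eventually_injOn_of_isCompact hL hconv (hinj.mono hLU)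
    fun x hx => hinv x (hLU hx)).and hmem⟩

theorem exists_leftInverse [(𝓝[I] (0 : ℝ)).NeBot] (hexp : HasSmoothExpansionOn I U Gh Gc)
    (hI : I ⊆ Ioi 0) (hU : IsOpen U) (hinj : InjOn (Gc 0) U)
    (hinv : ∀ x ∈ U, (fderiv ℝ (Gc 0) x).IsInvertible) (hL : IsCompact L) (hLU : L ⊆ U)
    (hA : IsCompact A) (hAL : A ⊆ Gc 0 '' interior L) :
    ∃ Fh Fc, HasSmoothExpansionOn I (interior A) Fh Fc ∧
      ∀ᶠ h in 𝓝[I] 0, LeftInvOn (Fh h) (Gh h) (interior L) ∧ A ⊆ Gh h '' interior L := by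
  have hW := isOpen_interior (s := L)
  have hWL := interior_subset (s := L)
  obtain ⟨𝒦, h𝒦, h𝒦inv, hinjh⟩ :=
    hexp.exists_isCompact_eventually_injOn_fderiv_mem hI hU hinj hinv hL hLU
  obtain ⟨δ, hδ, hsmall⟩ := exists_forall_le_of_eventually_nhdsWithin_zero hI
    (hinjh.and (hexp.eventually_subset_image hI hU hinv hW (hWL.trans hLU) hA hAL))
  have hleft (h) (hh : h ∈ I ∩ Iic δ) :
      LeftInvOn (Function.invFunOn (Gh h) (interior L)) (Gh h) (interior L) :=
    ((hsmall h hh.1 hh.2).1.1.mono hWL).leftInvOn_invFunOn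
  have hFh : IsExpandableOn (I ∩ Iic δ) (interior A)
      fun h => Function.invFunOn (Gh h) (interior L) :=
    (hexp.mono inter_subset_left).isExpandableOn_leftInverse (inter_subset_left.trans hI)
      (bddAbove_Iic.mono inter_subset_right) hU hinj hinv hW hWL hL hLU h𝒦 h𝒦inv
      (fun h hh x hx => (hsmall h hh.1 hh.2).1.2 x (hWL hx)) hleft isOpen_interior
      (interior_subset.trans hAL) (fun h hh => interior_subset.trans (hsmall h hh.1 hh.2).2)
  refine ⟨_, _, (hFh.ite_zero hδ).hasSmoothExpansionOn hI isOpen_interior, ?_⟩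
  filter_upwards [self_mem_nhdsWithin, mem_nhdsWithin_of_mem_nhds (Iic_mem_nhds hδ)] with h hh hle
  rw [if_pos (mem_Iic.1 hle)]
  exact ⟨hleft h ⟨hh, hle⟩, (hsmall h hh hle).2⟩

end HasSmoothExpansionOn

end InverseFamily

section Charts

theorem exists_isCompact_subset_image_interior {X Y : Type*} [TopologicalSpace X]
    [LocallyCompactSpace X] [TopologicalSpace Y] {f : X → Y} {U : Set X} {B : Set Y}
    (hU : IsOpen U) (hf : ∀ W ⊆ U, IsOpen W → IsOpen (f '' W)) (hB : IsCompact B)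
    (hBU : B ⊆ f '' U) : ∃ L ⊆ U, IsCompact L ∧ B ⊆ f '' interior L := by
  suffices h : ∀ y ∈ B, ∃ t ∈ 𝓝[B] y, ∃ L ⊆ U, IsCompact L ∧ t ⊆ f '' interior L from
    hB.induction_on ⟨∅, empty_subset U, isCompact_empty, empty_subset _⟩
      (fun s t hst ⟨L, hLU, hL, htL⟩ => ⟨L, hLU, hL, hst.trans htL⟩)
      (fun s t ⟨L, hLU, hL, hsL⟩ ⟨M, hMU, hM, htM⟩ =>
        ⟨L ∪ M, union_subset hLU hMU, hL.union hM, union_subset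
          (hsL.trans (image_mono (interior_mono subset_union_left)))
          (htM.trans (image_mono (interior_mono subset_union_right)))⟩) h
  rintro y hy
  obtain ⟨x, hx, rfl⟩ := hBU hy
  obtain ⟨L, hL, hxL, hLU⟩ := exists_compact_subset hU hx
  exact ⟨f '' interior L, mem_nhdsWithin_of_mem_nhds
    ((hf _ (interior_subset.trans hLU) isOpen_interior).mem_nhds (mem_image_of_mem f hxL)),
    L, hLU, hL, Subset.rfl⟩

theorem leftInvOn_inter_preimage_of_injOn {X Y : Type*} {f : X → Y} {g : Y → X} {C W : Set X}
    {V : Set Y} (hf : InjOn f C) (hWC : W ⊆ C) (hg : LeftInvOn g f W) (hV : V ⊆ f '' W) :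
    LeftInvOn g f (C ∩ f ⁻¹' V) := by
  rintro x ⟨hx, hxV⟩
  obtain ⟨w, hw, hwx⟩ := hV hxV
  rw [← hwx, hg hw, hf (hWC hw) hx hwx]

theorem IsDiffeoOntoNbhd.isInvertible_fderiv {n : ℕ} {G₀ : Eucl n → Eucl n} {U B : Set (Eucl n)}
    (h : IsDiffeoOntoNbhd G₀ U B) (hU : IsOpen U) {x : Eucl n} (hx : x ∈ U) :
    (fderiv ℝ G₀ x).IsInvertible := by
  obtain ⟨F₀, hF₀, hinv⟩ := h.smooth_inv
  have hG := ((h.contDiffOn.contDiffAt (hU.mem_nhds hx)).differentiableAt (by simp)).hasFDerivAt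
  have hF := ((hF₀.contDiffAt (h.isOpen_image.mem_nhds (mem_image_of_mem _ hx))).differentiableAt
    (by simp)).hasFDerivAt
  have hid : HasFDerivAt (F₀ ∘ G₀) (ContinuousLinearMap.id ℝ (Eucl n)) x :=
    (hasFDerivAt_id x).congr_of_eventuallyEq (eventually_of_mem (hU.mem_nhds hx) hinv)
  have hid' : HasFDerivAt (G₀ ∘ F₀) (ContinuousLinearMap.id ℝ (Eucl n)) (G₀ x) :=
    (hasFDerivAt_id (G₀ x)).congr_of_eventuallyEq <|
      eventually_of_mem (h.isOpen_image.mem_nhds (mem_image_of_mem _ hx)) <|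
        forall_mem_image.2 fun z hz => congrArg G₀ (hinv z hz)
  have hG' : HasFDerivAt G₀ (fderiv ℝ G₀ x) (F₀ (G₀ x)) := by rwa [hinv x hx]
  exact .of_inverse ((hG'.comp (G₀ x) hF).unique hid') ((hF.comp x hG).unique hid)

namespace HasSmoothExpansionOn

section

variable {E F : Type*} [NormedAddCommGroup E] [NormedSpace ℝ E] [FiniteDimensional ℝ E]
  [NormedAddCommGroup F] [NormedSpace ℝ F] {I : Set ℝ} {U W : Set E} {V : Set F} {Gh : ℝ → E → F}
  {Gc : ℕ → E → F}

theorem eventually_mapsTo (hexp : HasSmoothExpansionOn I U Gh Gc) (hI : I ⊆ Ioi 0) (hU : IsOpen U)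
    (hV : IsOpen V) {K : Set E} (hK : IsCompact K) (hKU : K ⊆ U) (hKV : MapsTo (Gc 0) K V) :
    ∀ᶠ h in 𝓝[I] 0, MapsTo (Gh h) K V :=
  eventually_forall_mem_of_isCompact hK fun _ hx =>
    (hexp.c1ConvergesAt hI hU (hKU hx)).tendsto.eventually (hV.mem_nhds (hKV hx))

theorem leftInvOn_leadingCoeff [FiniteDimensional ℝ F] [(𝓝[I] (0 : ℝ)).NeBot]
    (hexp : HasSmoothExpansionOn I U Gh Gc) (hI : I ⊆ Ioi 0) (hU : IsOpen U)
    (hinv : ∀ x ∈ U, (fderiv ℝ (Gc 0) x).IsInvertible) (hW : IsOpen W) (hWU : W ⊆ U)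
    {Fh : ℝ → F → E} {Fc : ℕ → F → E} (hFexp : HasSmoothExpansionOn I V Fh Fc) (hV : IsOpen V)
    (hF : ∀ᶠ h in 𝓝[I] 0, LeftInvOn (Fh h) (Gh h) W) :
    LeftInvOn (Fc 0) (Gc 0) (W ∩ Gc 0 ⁻¹' V) := by
  rintro x ⟨hx, hxV⟩
  have hFx : ∀ᶠ p : ℝ × E in 𝓝[I] 0 ×ˢ 𝓝 x, Fh p.1 (Gh p.1 p.2) = p.2 := by
    filter_upwards [hF.prod_mk (hW.mem_nhds hx)] with p hp
    exact hp.1 hp.2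
  exact tendsto_nhds_unique (hFexp.c1ConvergesAt hI hV hxV).tendsto
    ((hexp.c1ConvergesAt hI hU (hWU hx)).tendsto_leftInverse (hinv x (hWU hx)) hFx)

end

variable {E F : Type u} [NormedAddCommGroup E] [NormedSpace ℝ E] [FiniteDimensional ℝ E]
  [NormedAddCommGroup F] [NormedSpace ℝ F] [FiniteDimensional ℝ F] {I : Set ℝ} {U L : Set E}
  {A : Set F} {Gh : ℝ → E → F} {Gc : ℕ → E → F} {Fh : ℝ → F → E}

theorem eventually_injOn_and_leftInvOn (hexp : HasSmoothExpansionOn I U Gh Gc) (hI : I ⊆ Ioi 0)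
    (hU : IsOpen U) (hinj : InjOn (Gc 0) U) (hinv : ∀ x ∈ U, (fderiv ℝ (Gc 0) x).IsInvertible)
    (hL : IsCompact L) (hLU : L ⊆ U)
    (hF : ∀ᶠ h in 𝓝[I] 0, LeftInvOn (Fh h) (Gh h) (interior L) ∧ A ⊆ Gh h '' interior L)
    {C : Set E} (hC : IsCompact C) (hCU : C ⊆ U) :
    ∀ᶠ h in 𝓝[I] 0, InjOn (Gh h) C ∧ (∀ x ∈ C, (fderiv ℝ (Gh h) x).IsInvertible) ∧
      LeftInvOn (Fh h) (Gh h) (C ∩ Gh h ⁻¹' A) := by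
  obtain ⟨𝒦, -, h𝒦inv, hevent⟩ := hexp.exists_isCompact_eventually_injOn_fderiv_mem hI hU hinj hinv
    (hC.union hL) (union_subset hCU hLU)
  filter_upwards [hevent, hF] with h hh hFh
  exact ⟨hh.1.mono subset_union_left, fun x hx => h𝒦inv _ (hh.2 x (.inl hx)),
    (leftInvOn_inter_preimage_of_injOn hh.1 (interior_subset.trans subset_union_right)
      hFh.1 hFh.2).mono (inter_subset_inter_left _ subset_union_left)⟩

theorem eventually_mapsTo_and_leftInvOn (hexp : HasSmoothExpansionOn I U Gh Gc) (hI : I ⊆ Ioi 0)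
    (hU : IsOpen U) (hinj : InjOn (Gc 0) U) (hinv : ∀ x ∈ U, (fderiv ℝ (Gc 0) x).IsInvertible)
    (hL : IsCompact L) (hLU : L ⊆ U)
    (hF : ∀ᶠ h in 𝓝[I] 0, LeftInvOn (Fh h) (Gh h) (interior L) ∧ A ⊆ Gh h '' interior L)
    {K : Set E} (hK : IsCompact K) (hKUA : K ⊆ U ∩ Gc 0 ⁻¹' interior A) :
    ∀ᶠ h in 𝓝[I] 0, MapsTo (Gh h) K (interior A) ∧ LeftInvOn (Fh h) (Gh h) K := by
  have hKU := hKUA.trans inter_subset_left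
  filter_upwards [hexp.eventually_mapsTo hI hU isOpen_interior hK hKU
    (hKUA.trans inter_subset_right),
    hexp.eventually_injOn_and_leftInvOn hI hU hinj hinv hL hLU hF hK hKU] with h hmaps hh
  exact ⟨hmaps, fun x hx => hh.2.2 ⟨hx, interior_subset (s := A) (hmaps hx)⟩⟩

theorem eventually_eqOn_invFunOn (hexp : HasSmoothExpansionOn I U Gh Gc) (hI : I ⊆ Ioi 0)
    (hU : IsOpen U) (hinj : InjOn (Gc 0) U) (hinv : ∀ x ∈ U, (fderiv ℝ (Gc 0) x).IsInvertible)
    (hL : IsCompact L) (hLU : L ⊆ U)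
    (hF : ∀ᶠ h in 𝓝[I] 0, LeftInvOn (Fh h) (Gh h) (interior L) ∧ A ⊆ Gh h '' interior L)
    {W : Set E} (hW : IsOpen W) (hWc : IsCompact (closure W)) (hWU : closure W ⊆ U) :
    ∀ᶠ h in 𝓝[I] 0, InjOn (Gh h) W ∧ IsOpen (Gh h '' W) ∧
      ContDiffOn ℝ ∞ (Function.invFunOn (Gh h) W) (Gh h '' W) ∧
      EqOn (Function.invFunOn (Gh h) W) (Fh h) (A ∩ Gh h '' W) := by
  filter_upwards [self_mem_nhdsWithin,
    hexp.eventually_injOn_and_leftInvOn hI hU hinj hinv hL hLU hF hWc hWU] with h hhI hh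
  obtain ⟨hinjW, hinvW, hleft⟩ := hh
  have hinjh := hinjW.mono subset_closure
  have hinvh (x) (hx : x ∈ W) := hinvW x (subset_closure hx)
  have hsmooth := (hexp.1 h hhI).mono (subset_closure.trans hWU)
  refine ⟨hinjh, isOpen_image_of_isInvertible_fderiv hW hsmooth hinvh,
    contDiffOn_image_of_leftInvOn hW hsmooth hinvh hinjh.leftInvOn_invFunOn, ?_⟩
  rintro _ ⟨hxA, x, hx, rfl⟩
  rw [hinjh.leftInvOn_invFunOn hx, hleft ⟨subset_closure hx, hxA⟩]

end HasSmoothExpansionOn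

end Charts

theorem uniform_invertibility_of_asymptotic_chart_general {E F : Type u} [NormedAddCommGroup E]
    [NormedSpace ℝ E] [FiniteDimensional ℝ E] [NormedAddCommGroup F] [NormedSpace ℝ F]
    [FiniteDimensional ℝ F] {I : Set ℝ} (hI : I ⊆ Ioi 0) (hI0 : (0 : ℝ) ∈ closure I) {U : Set E}
    (hU : IsOpen U) {B : Set F} (hB : IsCompact B) {Gh : ℝ → E → F} {Gc : ℕ → E → F}
    (hexp : HasSmoothExpansionOn I U Gh Gc) (hinj : InjOn (Gc 0) U)
    (hinv : ∀ x ∈ U, (fderiv ℝ (Gc 0) x).IsInvertible) (hBU : B ⊆ Gc 0 '' U) :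
    ∃ V : Set F, IsOpen V ∧ B ⊆ V ∧ V ⊆ Gc 0 '' U ∧
    ∃ (Fh : ℝ → F → E) (Fc : ℕ → F → E),
      HasSmoothExpansionOn I V Fh Fc ∧
      (∀ y ∈ V, Fc 0 y ∈ U ∧ Gc 0 (Fc 0 y) = y) ∧
      (∀ K : Set E, K ⊆ U ∩ Gc 0 ⁻¹' V → IsCompact K →
        ∃ h₁ > 0, (∀ h ∈ I, h ≤ h₁ → ∀ x ∈ K, Gh h x ∈ V) ∧
          ∀ N : ℕ, ∃ C > 0, ∀ h ∈ I, h ≤ h₁ → ∀ x ∈ K, ‖Fh h (Gh h x) - x‖ ≤ C * h ^ N) ∧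
      (∀ Ut : Set E, IsOpen Ut → IsCompact (closure Ut) → closure Ut ⊆ U →
        ∃ h₀ > 0, ∃ Hinv : ℝ → F → E,
          (∀ h ∈ I, h ≤ h₀ →
            InjOn (Gh h) Ut ∧ IsOpen (Gh h '' Ut) ∧ ContDiffOn ℝ ∞ (Hinv h) (Gh h '' Ut) ∧
            (∀ x ∈ Ut, Hinv h (Gh h x) = x)) ∧
          (∀ K : Set F, K ⊆ V → IsCompact K → ∀ N : ℕ, ∃ C > 0,
            ∀ h ∈ I, h ≤ h₀ → ∀ y ∈ K ∩ Gh h '' Ut, ‖Hinv h y - Fh h y‖ ≤ C * h ^ N)) := by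
  have : (𝓝[I] (0 : ℝ)).NeBot := mem_closure_iff_nhdsWithin_neBot.1 hI0
  have hopen (W) (hWU : W ⊆ U) (hW : IsOpen W) : IsOpen (Gc 0 '' W) :=
    isOpen_image_of_isInvertible_fderiv hW ((hexp.2.1 0).mono hWU) fun x hx => hinv x (hWU hx)
  obtain ⟨L, hLU, hL, hBL⟩ := exists_isCompact_subset_image_interior hU hopen hB hBU
  obtain ⟨A, hA, hBA, hAL⟩ :=
    exists_compact_between hB (hopen _ (interior_subset.trans hLU) isOpen_interior) hBL
  obtain ⟨Fh, Fc, hFexp, hF⟩ := hexp.exists_leftInverse hI hU hinj hinv hL hLU hA hAL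
  have hVL : interior A ⊆ Gc 0 '' interior L := interior_subset.trans hAL
  have hzero {x y : E} (hxy : x = y) {h : ℝ} (hh : h ∈ I) (N : ℕ) : ‖x - y‖ ≤ 1 * h ^ N := by
    rw [hxy, sub_self, norm_zero, one_mul]
    exact pow_nonneg (hI hh).le N
  refine ⟨interior A, isOpen_interior, hBA, hVL.trans (image_mono (interior_subset.trans hLU)),
    Fh, Fc, hFexp, fun y hy => ?_, fun K hK hKc => ?_, fun Ut hUt hUtc hUtU => ?_⟩
  · obtain ⟨x, hx, rfl⟩ := hVL hy
    have hFx := hexp.leftInvOn_leadingCoeff hI hU hinv isOpen_interior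
      (interior_subset.trans hLU) hFexp isOpen_interior (hF.mono fun _ h => h.1) ⟨hx, hy⟩
    exact ⟨hFx.symm ▸ hLU (interior_subset hx), congrArg (Gc 0) hFx⟩
  · obtain ⟨h₁, hh₁, hsmall⟩ := exists_forall_le_of_eventually_nhdsWithin_zero hI
      (hexp.eventually_mapsTo_and_leftInvOn hI hU hinj hinv hL hLU hF hKc hK)
    exact ⟨h₁, hh₁, fun h hh hle => (hsmall h hh hle).1,
      fun N => ⟨1, one_pos, fun h hh hle x hx => hzero ((hsmall h hh hle).2 hx) hh N⟩⟩
  · obtain ⟨h₀, hh₀, hsmall⟩ := exists_forall_le_of_eventually_nhdsWithin_zero hI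
      (hexp.eventually_eqOn_invFunOn hI hU hinj hinv hL hLU hF hUt hUtc hUtU)
    refine ⟨h₀, hh₀, fun h => Function.invFunOn (Gh h) Ut, fun h hh hle => ?_,
      fun K hKV _ N => ⟨1, one_pos, fun h hh hle y hy => ?_⟩⟩
    · obtain ⟨hinjh, hopenh, hsmooth, -⟩ := hsmall h hh hle
      exact ⟨hinjh, hopenh, hsmooth, hinjh.leftInvOn_invFunOn⟩
    · exact hzero ((hsmall h hh hle).2.2.2 ⟨interior_subset (hKV hy.1), hy.2⟩) hh N

/-- (Uniform invertibility of asymptotic charts.) For every open set `Ũ` compactly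
contained in `U` there is `ℏ₀ > 0` such that for all `ℏ ∈ I ∩ (0,ℏ₀]` the restriction
of `Gh ℏ` to `Ũ` is injective, hence a diffeomorphism onto its open image with a smooth
inverse; moreover this inverse agrees, up to `O(ℏ^∞)` uniformly on compact subsets of
its domain, with the formal inverse `Fh` (a family of smooth maps admitting an
asymptotic expansion `F₀ + ℏF₁ + ⋯` with `F₀ = G₀⁻¹` and `Fh ∘ Gh = Id + O(ℏ^∞)`). -/
theorem uniform_invertibility_of_asymptotic_chart
    (n : ℕ) (hn : 1 ≤ n) (I : Set ℝ) (hI : I ⊆ Ioi 0) (hI0 : (0 : ℝ) ∈ closure I)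
    (U B : Set (Eucl n)) (hU : IsOpen U) (hUb : Bornology.IsBounded U)
    (hB : IsOpen B) (hBb : Bornology.IsBounded B)
    (Gh : ℝ → Eucl n → Eucl n) (Gc : ℕ → Eucl n → Eucl n)
    (hexp : HasCinftyExpansion I U Gh Gc)
    (hdiff : IsDiffeoOntoNbhd (Gc 0) U B) :
    ∃ V : Set (Eucl n), IsOpen V ∧ closure B ⊆ V ∧ V ⊆ Gc 0 '' U ∧
    ∃ (Fh : ℝ → Eucl n → Eucl n) (Fc : ℕ → Eucl n → Eucl n),
      -- `Fh` is the formal inverse of `Gh`: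
      HasCinftyExpansion I V Fh Fc ∧
      (∀ y ∈ V, Fc 0 y ∈ U ∧ Gc 0 (Fc 0 y) = y) ∧
      (∀ K : Set (Eucl n), K ⊆ U ∩ (Gc 0) ⁻¹' V → IsCompact K →
        ∃ h₁ > 0, (∀ h ∈ I, h ≤ h₁ → ∀ x ∈ K, Gh h x ∈ V) ∧
          ∀ N : ℕ, ∃ C > 0, ∀ h ∈ I, h ≤ h₁ → ∀ x ∈ K,
            ‖Fh h (Gh h x) - x‖ ≤ C * h ^ N) ∧
      -- uniform invertibility on open sets compactly contained in `U`:
      (∀ Ut : Set (Eucl n), IsOpen Ut → IsCompact (closure Ut) → closure Ut ⊆ U →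
        ∃ h₀ > 0, ∃ Hinv : ℝ → Eucl n → Eucl n,
          (∀ h ∈ I, h ≤ h₀ →
            InjOn (Gh h) Ut ∧ IsOpen (Gh h '' Ut) ∧
            ContDiffOn ℝ (⊤ : ℕ∞) (Hinv h) (Gh h '' Ut) ∧
            (∀ x ∈ Ut, Hinv h (Gh h x) = x)) ∧
          -- the inverse agrees with the formal inverse up to O(ℏ^∞) on compact
          -- subsets of its domain:
          (∀ K : Set (Eucl n), K ⊆ V → IsCompact K → ∀ N : ℕ, ∃ C > 0,
            ∀ h ∈ I, h ≤ h₀ → ∀ y ∈ K ∩ Gh h '' Ut,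
              ‖Hinv h y - Fh h y‖ ≤ C * h ^ N)) := by
  exact uniform_invertibility_of_asymptotic_chart_general hI hI0 hU hBb.isCompact_closure hexp
    hdiff.injOn (fun _ => hdiff.isInvertible_fderiv hU) hdiff.closure_subset_image
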